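/- arXiv:1110.1144 — 4 statements merged into one kernel-verified Lean document; each statement's English description precedes it below -/
import Mathlib

section
/- For all sufficiently large n, every simple graph on n vertices in which no two cycles have the same length has fewer than n + 1.98·√n edges. -/
/-!
Let `m` be the number of edges. Deleting a set of edges that meets every cycle leaves a forest, so
it suffices to hit all cycles with at most `1.9795 √m` edges. Take every edge independently with
probability `p = 0.81 / √m`; a cycle of length `i` is missed with probability `(1 - p) ^ i`, and by
hypothesis there is at most one such cycle for each `i`. The missed cycles are not repaired with one
edge each: two cycles sharing an edge are hit by one common edge, so `u` missed cycles cost only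
`(u + d) / 2` edges, where `d` is the size of some family of edge-disjoint missed cycles. The
lengths of edge-disjoint cycles add up to at most `m`, so counting a cycle of length `i` with the
weight `i / K + max 0 (1 - i / K) ≥ 1` bounds `d` by `m / K` plus a sum over the missed cycles of
length less than `K`.
-/

open Finset

section SetFamilies

variable {α : Type*}

/-- `T` is a transversal (hitting set) of the family `F` if it meets every member of `F`. -/
def IsTransversal (T : Finset α) (F : Finset (Finset α)) : Prop :=
  ∀ e ∈ F, ¬Disjoint e T

lemma IsTransversal.insert_of_erase [DecidableEq α] {T : Finset α} {F : Finset (Finset α)}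
    {e : Finset α} {x : α} (hT : IsTransversal T (F.erase e)) (hx : x ∈ e) :
    IsTransversal (insert x T) F := by
  intro e' he' hdisj
  rw [disjoint_insert_right] at hdisj
  by_cases h : e' = e
  · exact hdisj.1 (h ▸ hx)
  · exact hT e' (mem_erase.2 ⟨h, he'⟩) hdisj.2

lemma IsTransversal.union_of_filter_disjoint [DecidableEq α] {S T : Finset α}
    {F : Finset (Finset α)} (hT : IsTransversal T {e ∈ F | Disjoint e S}) :
    IsTransversal (S ∪ T) F := by
  intro e he hdisj
  rw [disjoint_union_right] at hdisj
  exact hT e (mem_filter.2 ⟨he, hdisj.1⟩) hdisj.2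

/-- The right-hand side is the expectation of the left-hand side when `S` contains each element of
`V` independently with probability `p`; the induction is the method of conditional expectations. -/
lemma exists_subset_card_add_sum_disjoint_le [DecidableEq α] {p : ℝ} (hp0 : 0 ≤ p)
    (hp1 : p ≤ 1) (w : Finset α → ℝ) (V : Finset α) (F : Finset (Finset α)) :
    ∃ S ⊆ V, (#S : ℝ) + ∑ e ∈ F with Disjoint e S, w e ≤
      p * #V + ∑ e ∈ F, w e * (1 - p) ^ #(e ∩ V) := by
  induction V using Finset.induction_on generalizing F with
  | empty => exact ⟨∅, by simp⟩
  | insert v V hv ih =>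
    set A := ∑ e ∈ F, w e * (1 - p) ^ #(e ∩ V)
    set B := ∑ e ∈ F with v ∉ e, w e * (1 - p) ^ #(e ∩ V)
    have hsplit : ∑ e ∈ F, w e * (1 - p) ^ #(e ∩ insert v V) = (1 - p) * A + p * B := by
      simp only [A, B, sum_filter, mul_sum, ← sum_add_distrib]
      refine sum_congr rfl fun e _ ↦ ?_
      by_cases h : v ∈ e
      · rw [inter_insert_of_mem h, card_insert_of_notMem (by simp [hv]), if_neg (not_not.2 h)]
        ring
      · rw [inter_insert_of_notMem h, if_pos h]
        ring
    have hmin : min (p * #V + A) (1 + (p * #V + B)) ≤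
        p * #(insert v V) + ((1 - p) * A + p * B) := by
      refine (Convex.min_le_combo _ _ (sub_nonneg.2 hp1) hp0 (sub_add_cancel 1 p)).trans_eq ?_
      rw [card_insert_of_notMem hv, smul_eq_mul, smul_eq_mul]
      push_cast
      ring
    rw [hsplit]
    rcases min_le_iff.1 hmin with hout | hin
    · obtain ⟨S, hSV, hS⟩ := ih F
      exact ⟨S, hSV.trans (subset_insert v V), hS.trans hout⟩
    · obtain ⟨S, hSV, hS⟩ := ih {e ∈ F | v ∉ e}
      refine ⟨insert v S, insert_subset_insert v hSV, le_trans ?_ hin⟩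
      rw [card_insert_of_notMem fun h ↦ hv (hSV h)]
      simp only [disjoint_insert_right, ← filter_filter]
      push_cast
      linarith

lemma exists_isTransversal_card_le {F : Finset (Finset α)} (hF : ∀ e ∈ F, e.Nonempty) :
    ∃ T, IsTransversal T F ∧ #T ≤ #F := by
  classical
  choose x hx using hF
  refine ⟨F.attach.image fun e ↦ x e.1 e.2, fun e he ↦ ?_, ?_⟩
  · exact not_disjoint_iff.2 ⟨x e he, hx e he, mem_image.2 ⟨⟨e, he⟩, mem_attach _ _, rfl⟩⟩
  · exact card_image_le.trans_eq F.card_attach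

/-- As long as two members of `F` intersect, a common element hits both. -/
lemma exists_isTransversal_two_mul_card_le (F : Finset (Finset α)) (hF : ∀ e ∈ F, e.Nonempty) :
    ∃ T, ∃ D ⊆ F, IsTransversal T F ∧ (D : Set (Finset α)).PairwiseDisjoint id ∧
      2 * #T ≤ #F + #D := by
  classical
  induction F using Finset.strongInduction with
  | H F ih =>
    by_cases hdisj : (F : Set (Finset α)).PairwiseDisjoint id
    · obtain ⟨T, hT, hcard⟩ := exists_isTransversal_card_le hF
      exact ⟨T, F, Subset.rfl, hT, hdisj, by lia⟩
    · simp only [Set.PairwiseDisjoint, Set.Pairwise, not_forall] at hdisj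
      obtain ⟨a, ha, b, hb, hab, hinter⟩ := hdisj
      obtain ⟨x, hxa, hxb⟩ := not_disjoint_iff.1 hinter
      have hb' : b ∈ F.erase a := mem_erase.2 ⟨hab.symm, hb⟩
      have hsub : (F.erase a).erase b ⊂ F := (erase_ssubset hb').trans (erase_ssubset ha)
      obtain ⟨T, D, hDF, hT, hD, hcard⟩ := ih _ hsub fun e he ↦ hF e (hsub.1 he)
      have hTF : IsTransversal (insert x T) F := by
        simpa only [insert_idem] using (hT.insert_of_erase hxb).insert_of_erase hxa
      refine ⟨insert x T, D, hDF.trans hsub.1, hTF, hD, ?_⟩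
      have := card_insert_le x T
      have := card_erase_add_one (mem_coe.1 ha)
      have := card_erase_add_one hb'
      lia

lemma card_le_of_pairwiseDisjoint {D : Finset (Finset α)} {E : Finset α}
    (hD : (D : Set (Finset α)).PairwiseDisjoint id) (hDE : ∀ e ∈ D, e ⊆ E)
    {c : ℝ} {h : ℕ → ℝ} (hc : 0 ≤ c) (hch : ∀ i : ℕ, 1 ≤ c * i + h i) :
    (#D : ℝ) ≤ c * #E + ∑ e ∈ D, h #e := by
  classical
  have hsum : ∑ e ∈ D, #e ≤ #E :=
    (card_biUnion hD).symm.trans_le (card_le_card (biUnion_subset.2 hDE))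
  calc (#D : ℝ) = ∑ _e ∈ D, (1 : ℝ) := by simp
    _ ≤ ∑ e ∈ D, (c * #e + h #e) := sum_le_sum fun _ _ ↦ hch _
    _ = c * ((∑ e ∈ D, #e : ℕ) : ℝ) + ∑ e ∈ D, h #e := by
        rw [sum_add_distrib, Nat.cast_sum, mul_sum]
    _ ≤ c * #E + ∑ e ∈ D, h #e := by gcongr

lemma exists_isTransversal_card_le_sum {F : Finset (Finset α)} {E : Finset α}
    (hF : ∀ e ∈ F, e.Nonempty) (hFE : ∀ e ∈ F, e ⊆ E) {p c : ℝ} (hp0 : 0 ≤ p) (hp1 : p ≤ 1)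
    {h : ℕ → ℝ} (hc : 0 ≤ c) (hh : ∀ i, 0 ≤ h i) (hch : ∀ i : ℕ, 1 ≤ c * i + h i) :
    ∃ T, IsTransversal T F ∧
      (#T : ℝ) ≤ (p + c / 2) * #E + ∑ e ∈ F, (1 + h #e) / 2 * (1 - p) ^ #e := by
  classical
  obtain ⟨S, -, hS⟩ :=
    exists_subset_card_add_sum_disjoint_le hp0 hp1 (fun e ↦ (1 + h #e) / 2) E F
  set U := {e ∈ F | Disjoint e S}
  have hUF : U ⊆ F := filter_subset _ _
  obtain ⟨T, D, hDU, hT, hD, hTcard⟩ :=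
    exists_isTransversal_two_mul_card_le U fun e he ↦ hF e (hUF he)
  refine ⟨S ∪ T, hT.union_of_filter_disjoint, ?_⟩
  have hDcard : (#D : ℝ) ≤ c * #E + ∑ e ∈ U, h #e :=
    (card_le_of_pairwiseDisjoint hD (fun e he ↦ hFE e (hUF (hDU he))) hc hch).trans <|
      add_le_add_right (sum_le_sum_of_subset_of_nonneg hDU fun e _ _ ↦ hh #e) _
  have hUsum : ∑ e ∈ U, (1 + h #e) / 2 = (#U + ∑ e ∈ U, h #e) / 2 := by
    rw [← sum_div, sum_add_distrib, sum_const, nsmul_one]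
  have hEsum : ∑ e ∈ F, (1 + h #e) / 2 * (1 - p) ^ #(e ∩ E) =
      ∑ e ∈ F, (1 + h #e) / 2 * (1 - p) ^ #e :=
    sum_congr rfl fun e he ↦ by rw [inter_eq_left.2 (hFE e he)]
  have hunion : (#(S ∪ T) : ℝ) ≤ #S + #T := mod_cast card_union_le S T
  have hTcard' : 2 * (#T : ℝ) ≤ #U + #D := mod_cast hTcard
  linarith

end SetFamilies

section Series

lemma sum_comp_le_of_hasSum {ι κ : Type*} {s : Finset ι} {g : ι → κ} (hg : Set.InjOn g s)
    {f : κ → ℝ} (hf : ∀ k, 0 ≤ f k) {a : ℝ} (hfa : HasSum f a) : ∑ i ∈ s, f (g i) ≤ a := by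
  classical
  rw [← sum_image hg]
  exact sum_le_hasSum _ (fun k _ ↦ hf k) hfa

lemma sq_mul_sum_range_sub_mul_pow {R : Type*} [CommRing R] (p : R) (K : ℕ) :
    p ^ 2 * ∑ i ∈ range K, ((K : R) - i) * (1 - p) ^ i =
      K * p - (1 - p) * (1 - (1 - p) ^ K) := by
  induction K with
  | zero => simp
  | succ K ih =>
    have hgeom : p * ∑ i ∈ range K, (1 - p) ^ i = 1 - (1 - p) ^ K := by
      simpa using mul_neg_geom_sum (1 - p) K
    have hsucc : ∑ i ∈ range (K + 1), (((K + 1 : ℕ) : R) - i) * (1 - p) ^ i =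
        ∑ i ∈ range K, ((K : R) - i) * (1 - p) ^ i + ∑ i ∈ range K, (1 - p) ^ i +
          (1 - p) ^ K := by
      rw [sum_range_succ, ← sum_add_distrib]
      push_cast
      congr 1
      · exact sum_congr rfl fun i _ ↦ by ring
      · ring
    rw [hsucc, mul_add, mul_add, ih]
    push_cast
    linear_combination p * hgeom

lemma hasSum_max_zero_one_sub_div_mul_pow {p : ℝ} (hp : p ≠ 0) {K : ℕ} (hK : 0 < K) :
    HasSum (fun i : ℕ ↦ max 0 (1 - (i : ℝ) / K) * (1 - p) ^ i)
      (1 / p - (1 - p) * (1 - (1 - p) ^ K) / (K * p ^ 2)) := by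
  have hK' : (0 : ℝ) < K := mod_cast hK
  have hsum : ∑ i ∈ range K, max 0 (1 - (i : ℝ) / K) * (1 - p) ^ i =
      1 / p - (1 - p) * (1 - (1 - p) ^ K) / (K * p ^ 2) := by
    calc _ = (∑ i ∈ range K, ((K : ℝ) - i) * (1 - p) ^ i) / K := by
          rw [sum_div]
          refine sum_congr rfl fun i hi ↦ ?_
          have hiK : (i : ℝ) ≤ K := mod_cast (mem_range.1 hi).le
          rw [max_eq_right (sub_nonneg.2 ((div_le_one hK').2 hiK))]
          field_simp
      _ = p ^ 2 * (∑ i ∈ range K, ((K : ℝ) - i) * (1 - p) ^ i) / (K * p ^ 2) := by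
          field_simp
      _ = _ := by
          rw [sq_mul_sum_range_sub_mul_pow]
          field_simp
  rw [← hsum]
  refine hasSum_sum_of_ne_finset_zero fun i hi ↦ ?_
  have hKi : (K : ℝ) ≤ i := by simpa using hi
  rw [max_eq_left (sub_nonpos.2 ((one_le_div hK').2 hKi)), zero_mul]

end Series

section Numerics

lemma one_sub_div_pow_le {s : ℝ} (hs : 0.81 ≤ s) {K : ℕ} (hK : 2.775 * s ≤ K) :
    (1 - 0.81 / s) ^ K ≤ 0.106 := by
  have hs0 : 0 < s := by linarith
  have hq : 0 ≤ 1 - 0.81 / s := sub_nonneg.2 ((div_le_one hs0).2 hs)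
  have hexponent : (2.24775 : ℝ) ≤ K * (0.81 / s) := by
    rw [mul_div_assoc', le_div_iff₀ hs0]
    linarith
  have hexp : (1 / 0.106 : ℝ) ≤ Real.exp 2.24775 := by
    calc (1 / 0.106 : ℝ)
        ≤ 2.7182818283 * 2.7182818283 * (1 + 0.24775 + 0.24775 ^ 2 / 2) := by norm_num
      _ ≤ Real.exp 1 * Real.exp 1 * Real.exp 0.24775 := by
          gcongr
          · exact Real.exp_one_gt_d9.le
          · exact Real.exp_one_gt_d9.le
          · exact Real.quadratic_le_exp_of_nonneg (by norm_num)
      _ = Real.exp 2.24775 := by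
          rw [← Real.exp_add, ← Real.exp_add]
          norm_num
  calc (1 - 0.81 / s) ^ K ≤ Real.exp (-(0.81 / s)) ^ K :=
        pow_le_pow_left₀ hq (Real.one_sub_le_exp_neg _) K
    _ = Real.exp (-(K * (0.81 / s))) := by rw [← Real.exp_nat_mul, mul_neg]
    _ ≤ Real.exp (-2.24775) := by gcongr
    _ ≤ 0.106 := by
        rw [Real.exp_neg, inv_le_comm₀ (Real.exp_pos _) (by norm_num), ← one_div]
        exact hexp

/-- For `p = a / s` and `K = k * s`, the left-hand side divided by `s` tends to
`a + 1 / (2 * k) + 1 / a - (1 - exp (-a * k)) / (2 * k * a ^ 2)`, which is about `1.9791` at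
`a = 0.81`, `k = 2.775`, close to its minimum. -/
lemma transversal_bound_le {s : ℝ} (hs : 2000 ≤ s) {K : ℕ} (hK : 2.775 * s ≤ K)
    (hK' : (K : ℝ) ≤ 2.775 * s + 1) :
    (0.81 / s + 1 / (2 * K)) * s ^ 2 + 1 / (0.81 / s) -
      (1 - 0.81 / s) * (1 - (1 - 0.81 / s) ^ K) / (2 * K * (0.81 / s) ^ 2) ≤ 1.9795 * s := by
  have hs0 : 0 < s := by linarith
  have hK0 : (0 : ℝ) < K := by linarith
  have hp : 0.81 / s ≤ 0.81 / 2000 := by gcongr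
  have hmiss : (1 - 0.81 / s) ^ K ≤ 0.106 := one_sub_div_pow_le (by linarith) hK
  have hsample : 0.81 / s * s ^ 2 = 0.81 * s := by field_simp
  have hlong : 1 / (2 * K) * s ^ 2 ≤ 0.180181 * s := by
    rw [one_div_mul_eq_div, div_le_iff₀ (by positivity)]
    nlinarith
  have hmissed : 1 / (0.81 / s) ≤ 1.234568 * s := by
    rw [one_div_div, div_le_iff₀ (by norm_num)]
    linarith
  have hshort : 0.24525 * s ≤
      (1 - 0.81 / s) * (1 - (1 - 0.81 / s) ^ K) / (2 * K * (0.81 / s) ^ 2) := by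
    rw [le_div_iff₀ (by positivity)]
    calc 0.24525 * s * (2 * K * (0.81 / s) ^ 2) = 0.24525 * 2 * 0.81 ^ 2 * (K / s) := by
          field_simp
      _ ≤ 0.24525 * 2 * 0.81 ^ 2 * 2.7755 := by
          gcongr
          rw [div_le_iff₀ hs0]
          linarith
      _ ≤ (1 - 0.81 / 2000) * (1 - 0.106) := by norm_num
      _ ≤ (1 - 0.81 / s) * (1 - (1 - 0.81 / s) ^ K) := by
          gcongr
          linarith
  rw [add_mul, hsample]
  linarith

lemma sq_lt_of_sq_add_one_le {r s : ℝ} (hr : 2000 ≤ r) (h : s ^ 2 + 1 ≤ r ^ 2 + 1.9795 * s) :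
    s ^ 2 < r ^ 2 + 1.98 * r := by
  have hs : s - 0.98975 ≤ r := (abs_le_of_sq_le_sq' (by linarith) (by linarith)).2
  linarith

end Numerics

section TransversalBound

variable {α : Type*} {F : Finset (Finset α)} {E : Finset α}

lemma exists_isTransversal_card_le_of_injOn_card (hF : ∀ e ∈ F, e.Nonempty)
    (hFE : ∀ e ∈ F, e ⊆ E) (hinj : Set.InjOn card (F : Set (Finset α)))
    {p : ℝ} (hp0 : 0 < p) (hp1 : p ≤ 1) {K : ℕ} (hK : 0 < K) :
    ∃ T, IsTransversal T F ∧
      (#T : ℝ) ≤ (p + 1 / (2 * K)) * #E + 1 / p -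
        (1 - p) * (1 - (1 - p) ^ K) / (2 * K * p ^ 2) := by
  have hq : 0 ≤ 1 - p := sub_nonneg.2 hp1
  set h : ℕ → ℝ := fun i ↦ max 0 (1 - (i : ℝ) / K)
  have hh : ∀ i, 0 ≤ h i := fun i ↦ le_max_left _ _
  have hch : ∀ i : ℕ, 1 ≤ 1 / (K : ℝ) * i + h i := fun i ↦ by
    rw [one_div_mul_eq_div, ← sub_le_iff_le_add']
    exact le_max_right _ _
  obtain ⟨T, hT, hcard⟩ := exists_isTransversal_card_le_sum hF hFE hp0.le hp1 (by positivity) hh hch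
  have hgeom : HasSum (fun i : ℕ ↦ (1 - p) ^ i) (1 / p) := by
    simpa using hasSum_geometric_of_lt_one hq (by linarith)
  have hweights : HasSum (fun i ↦ (1 + h i) / 2 * (1 - p) ^ i)
      ((1 / p + (1 / p - (1 - p) * (1 - (1 - p) ^ K) / (K * p ^ 2))) / 2) := by
    refine ((hgeom.add (hasSum_max_zero_one_sub_div_mul_pow hp0.ne' hK)).div_const 2).congr_fun ?_
    intro i
    ring
  have hsum : ∑ e ∈ F, (1 + h #e) / 2 * (1 - p) ^ #e ≤ _ :=
    sum_comp_le_of_hasSum hinj (fun i ↦ by have := hh i; positivity) hweights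
  refine ⟨T, hT, (hcard.trans (add_le_add_right hsum _)).trans_eq ?_⟩
  ring

lemma exists_isTransversal_card_le_mul_sqrt (hF : ∀ e ∈ F, e.Nonempty) (hFE : ∀ e ∈ F, e ⊆ E)
    (hinj : Set.InjOn card (F : Set (Finset α))) (hE : 2000 ≤ √(#E : ℝ)) :
    ∃ T, IsTransversal T F ∧ (#T : ℝ) ≤ 1.9795 * √(#E : ℝ) := by
  set s := √(#E : ℝ)
  have hsq : s ^ 2 = #E := Real.sq_sqrt (Nat.cast_nonneg _)
  have hs0 : 0 < s := by linarith
  obtain ⟨T, hT, hcard⟩ := exists_isTransversal_card_le_of_injOn_card hF hFE hinj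
    (p := 0.81 / s) (by positivity) ((div_le_one hs0).2 (by linarith))
    (K := ⌈2.775 * s⌉₊) (Nat.ceil_pos.2 (by positivity))
  rw [← hsq] at hcard
  exact ⟨T, hT, hcard.trans <| transversal_bound_le hE (Nat.le_ceil _)
    (Nat.ceil_lt_add_one (by positivity)).le⟩

end TransversalBound

section Graphs

open SimpleGraph

variable {V : Type*}

lemma card_toFinset_edges_of_isCycle [DecidableEq V] {G : SimpleGraph V} {u : V}
    {c : G.Walk u u} (hc : c.IsCycle) :
    #c.edges.toFinset = c.length := by
  rw [List.toFinset_card_of_nodup hc.edges_nodup, Walk.length_edges]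

variable [Fintype V]

lemma ncard_edgeSet_add_one_le_of_isAcyclic [Nonempty V] {G : SimpleGraph V} (hG : G.IsAcyclic) :
    G.edgeSet.ncard + 1 ≤ Fintype.card V := by
  classical
  obtain ⟨T, hGT, -, hT⟩ :=
    (connected_top (V := V)).exists_isTree_le_of_le_of_isAcyclic le_top hG
  have hle : G.edgeSet.ncard ≤ T.edgeSet.ncard := Set.ncard_le_ncard (edgeSet_mono hGT)
  rw [← hT.card_edgeFinset, ← Set.ncard_coe_finset, coe_edgeFinset]
  lia

variable [DecidableEq V] (G : SimpleGraph V)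

open Classical in
/-- The edge sets of the cycles of `G`. A cycle as a subgraph is identified with its edge set, so
that the choice of a base point and of a direction is forgotten. -/
noncomputable def cycleEdgeSets : Finset (Finset (Sym2 V)) :=
  {C | ∃ (u : V) (c : G.Walk u u), c.IsCycle ∧ c.edges.toFinset = C}

variable {G}

lemma mem_cycleEdgeSets {C : Finset (Sym2 V)} :
    C ∈ cycleEdgeSets G ↔ ∃ (u : V) (c : G.Walk u u), c.IsCycle ∧ c.edges.toFinset = C := by
  simp [cycleEdgeSets]

lemma nonempty_of_mem_cycleEdgeSets {C : Finset (Sym2 V)} (hC : C ∈ cycleEdgeSets G) :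
    C.Nonempty := by
  obtain ⟨u, c, hc, rfl⟩ := mem_cycleEdgeSets.1 hC
  have := hc.three_le_length
  rw [← card_pos, card_toFinset_edges_of_isCycle hc]
  lia

lemma coe_subset_edgeSet_of_mem_cycleEdgeSets {C : Finset (Sym2 V)} (hC : C ∈ cycleEdgeSets G) :
    (C : Set (Sym2 V)) ⊆ G.edgeSet := by
  obtain ⟨u, c, -, rfl⟩ := mem_cycleEdgeSets.1 hC
  exact fun e he ↦ c.edges_subset_edgeSet (List.mem_toFinset.1 he)

lemma injOn_card_cycleEdgeSets
    (hG : ∀ (u v : V) (c₁ : G.Walk u u) (c₂ : G.Walk v v), c₁.IsCycle → c₂.IsCycle →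
      c₁.length = c₂.length → c₁.edges.toFinset = c₂.edges.toFinset) :
    Set.InjOn card (cycleEdgeSets G : Set (Finset (Sym2 V))) := by
  intro C₁ hC₁ C₂ hC₂ hcard
  obtain ⟨u, c₁, hc₁, rfl⟩ := mem_cycleEdgeSets.1 hC₁
  obtain ⟨v, c₂, hc₂, rfl⟩ := mem_cycleEdgeSets.1 hC₂
  rw [card_toFinset_edges_of_isCycle hc₁, card_toFinset_edges_of_isCycle hc₂] at hcard
  exact hG u v c₁ c₂ hc₁ hc₂ hcard

lemma IsTransversal.isAcyclic_deleteEdges {T : Finset (Sym2 V)}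
    (hT : IsTransversal T (cycleEdgeSets G)) :
    (G.deleteEdges (T : Set (Sym2 V))).IsAcyclic := by
  intro u c hc
  have hle : G.deleteEdges (T : Set (Sym2 V)) ≤ G := G.deleteEdges_le _
  refine hT c.edges.toFinset (mem_cycleEdgeSets.2 ⟨u, c.mapLe hle, hc.mapLe hle, ?_⟩) ?_
  · rw [Walk.edges_mapLe_eq_edges]
  · refine disjoint_left.2 fun e he heT ↦ ?_
    have := c.edges_subset_edgeSet (List.mem_toFinset.1 he)
    rw [edgeSet_deleteEdges] at this
    exact this.2 heT

lemma IsTransversal.ncard_edgeSet_add_one_le [Nonempty V] {T : Finset (Sym2 V)}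
    (hT : IsTransversal T (cycleEdgeSets G)) :
    G.edgeSet.ncard + 1 ≤ Fintype.card V + #T := by
  have hforest := ncard_edgeSet_add_one_le_of_isAcyclic hT.isAcyclic_deleteEdges
  have hdelete := Set.ncard_le_ncard_sdiff_add_ncard G.edgeSet (T : Set (Sym2 V))
  rw [edgeSet_deleteEdges] at hforest
  rw [Set.ncard_coe_finset] at hdelete
  lia

end Graphs

theorem stmt_1_general {V : Type*} [Fintype V] [DecidableEq V] (hV : 2000 ^ 2 ≤ Fintype.card V)
    (G : SimpleGraph V)
    (hG : ∀ (u v : V) (c₁ : G.Walk u u) (c₂ : G.Walk v v), c₁.IsCycle → c₂.IsCycle →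
      c₁.length = c₂.length → c₁.edges.toFinset = c₂.edges.toFinset) :
    (G.edgeSet.ncard : ℝ) < Fintype.card V + 1.98 * √(Fintype.card V : ℝ) := by
  classical
  have : Nonempty V := Fintype.card_pos_iff.1 (by lia)
  have hr : 2000 ≤ √(Fintype.card V : ℝ) := Real.le_sqrt_of_sq_le (mod_cast hV)
  have hm : #G.edgeFinset = G.edgeSet.ncard := by
    rw [← Set.ncard_coe_finset, SimpleGraph.coe_edgeFinset]
  rcases le_total G.edgeSet.ncard (Fintype.card V) with hle | hge
  · have : (G.edgeSet.ncard : ℝ) ≤ Fintype.card V := mod_cast hle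
    linarith
  · have hs : 2000 ≤ √(#G.edgeFinset : ℝ) :=
      hr.trans (Real.sqrt_le_sqrt (by rw [hm]; exact_mod_cast hge))
    obtain ⟨T, hT, hTcard⟩ := exists_isTransversal_card_le_mul_sqrt
      (fun _ ↦ nonempty_of_mem_cycleEdgeSets)
      (fun _ hC ↦ by
        rw [← coe_subset, SimpleGraph.coe_edgeFinset]
        exact coe_subset_edgeSet_of_mem_cycleEdgeSets hC)
      (injOn_card_cycleEdgeSets hG) hs
    rw [hm] at hTcard
    have hedges : (G.edgeSet.ncard : ℝ) + 1 ≤ Fintype.card V + #T :=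
      mod_cast hT.ncard_edgeSet_add_one_le
    have := sq_lt_of_sq_add_one_le (s := √(G.edgeSet.ncard : ℝ)) hr (by
      rw [Real.sq_sqrt (Nat.cast_nonneg _), Real.sq_sqrt (Nat.cast_nonneg _)]
      linarith)
    rwa [Real.sq_sqrt (Nat.cast_nonneg _), Real.sq_sqrt (Nat.cast_nonneg _)] at this

/-- For all sufficiently large n, every simple graph on n vertices
in which no two cycles have the same length has fewer than n + 1.98·√n edges. -/
theorem stmt_1 :
    ∃ N : ℕ, ∀ n : ℕ, N ≤ n → ∀ G : SimpleGraph (Fin n),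
      (∀ (u v : Fin n) (c₁ : G.Walk u u) (c₂ : G.Walk v v),
        c₁.IsCycle → c₂.IsCycle → c₁.length = c₂.length →
          c₁.edges.toFinset = c₂.edges.toFinset) →
      (G.edgeSet.ncard : ℝ) < n + 1.98 * Real.sqrt n := by
  refine ⟨2000 ^ 2, fun n hn G hG ↦ ?_⟩
  simpa using stmt_1_general (by simpa using hn) G hG
end

section
/- There is a constant c > 0 such that for every k ≥ 2 and every n, every simple graph on n vertices with more than c·k·n^{1+1/k} edges contains a cycle of length exactly 2k. -/
/-!
Pass to a bipartite subgraph whose degrees all exceed a large multiple of `k * n ^ (1 / k)`, and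
consider the spheres around one of its vertices. If the graph between two consecutive spheres were
dense, it would contain a long cycle with a chord. Let `a` be the last common ancestor, in a
breadth-first search tree, of the vertices of that cycle in the lower sphere. Label these vertices
by the child of `a` they descend from, and the other vertices of the cycle by one extra label. Two
vertices with different children are joined by a path through `a`, so without `2k`-cycles they are
not joined by a path of the complementary even length along the chorded cycle. Sliding such paths
along the cycle and across the chord shows that the labelling has period 2. So only one child
occurs, contradicting the choice of `a`. Hence the graph between consecutive spheres is sparse, and
the degree condition makes the spheres grow by a factor exceeding `n ^ (1 / k)` at each of the first
`k` steps, which leaves more than `n` vertices in the last one.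
-/

namespace BondySimonovits

open Finset SimpleGraph

/-! ### Bipartite subgraphs of large minimum degree -/

theorem two_mul_card_filter_apply_ne {V : Type*} [Fintype V] [DecidableEq V] {u v : V}
    (huv : u ≠ v) : 2 * #{f : V → Bool | f u ≠ f v} = Fintype.card (V → Bool) := by
  have hswap : #{f : V → Bool | f u ≠ f v} = #{f : V → Bool | ¬ f u ≠ f v} := by
    refine card_nbij' (fun f ↦ Function.update f u (!f u)) (fun f ↦ Function.update f u (!f u))
      ?_ ?_ ?_ ?_ <;> intro f <;> simp +contextual [huv.symm, Bool.eq_not]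
  rw [two_mul]
  nth_rw 2 [hswap]
  exact card_filter_add_card_filter_not _

theorem exists_isBipartite_ncard_edgeSet_le {V : Type*} [Finite V] (G : SimpleGraph V) :
    ∃ H ≤ G, H.IsBipartite ∧ G.edgeSet.ncard ≤ 2 * H.edgeSet.ncard := by
  classical
  have := Fintype.ofFinite V
  let cut (f : V → Bool) : SimpleGraph V := G ⊓ (⊤ : SimpleGraph Bool).comap f
  have cut_edges (f : V → Bool) :
      (cut f).edgeSet.ncard = #{e ∈ G.edgeFinset | e ∈ (cut f).edgeSet} := by
    rw [← Set.ncard_coe_finset]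
    congr 1
    ext e
    simp only [coe_filter, mem_edgeFinset, Set.mem_ofPred_eq]
    exact ⟨fun h ↦ ⟨edgeSet_mono inf_le_left h, h⟩, And.right⟩
  have crossing (e) (he : e ∈ G.edgeFinset) :
      2 * #{f | e ∈ (cut f).edgeSet} = Fintype.card (V → Bool) := by
    induction e with | h u v =>
    rw [mem_edgeFinset, mem_edgeSet] at he
    simpa [cut, he] using two_mul_card_filter_apply_ne he.ne
  have average : ∑ _f : V → Bool, G.edgeSet.ncard = ∑ f, 2 * (cut f).edgeSet.ncard :=
    calc ∑ _f : V → Bool, G.edgeSet.ncard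
      _ = ∑ e ∈ G.edgeFinset, 2 * #{f | e ∈ (cut f).edgeSet} := by
        rw [sum_congr rfl crossing, sum_const, sum_const, smul_eq_mul, smul_eq_mul, mul_comm,
          card_univ, Set.ncard_eq_toFinset_card', edgeFinset]
      _ = 2 * ∑ f, #{e ∈ G.edgeFinset | e ∈ (cut f).edgeSet} := by
        rw [← mul_sum]
        exact congrArg _ (sum_card_bipartiteAbove_eq_sum_card_bipartiteBelow _)
      _ = ∑ f, 2 * (cut f).edgeSet.ncard := by simp_rw [mul_sum, cut_edges]
  obtain ⟨f, -, hf⟩ := exists_le_of_sum_le univ_nonempty average.le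
  have hcut : (cut f).Coloring Bool := Coloring.mk f fun h ↦ h.2
  exact ⟨cut f, inf_le_left, hcut.colorable, hf⟩

open scoped Classical in
theorem ncard_edgeSet_deleteIncidenceSet {V : Type*} [Fintype V] (G : SimpleGraph V) (v : V) :
    ((G.deleteIncidenceSet v).edgeSet.ncard : ℝ) = G.edgeSet.ncard - G.degree v := by
  have hle := G.degree_le_card_edgeFinset v
  have hcard := G.card_edgeFinset_deleteIncidenceSet v
  simp only [edgeFinset, ← Set.ncard_eq_toFinset_card'] at hle hcard
  rw [hcard, Nat.cast_sub hle]

open scoped Classical in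
theorem exists_le_forall_lt_degree {V : Type*} [Fintype V] (d : ℝ) (G : SimpleGraph V)
    (hG : d * G.support.ncard < G.edgeSet.ncard) :
    ∃ H ≤ G, H ≠ ⊥ ∧ ∀ v ∈ H.support, d < H.degree v := by
  induction G using WellFoundedLT.induction with | _ G ih =>
  by_cases hdeg : ∀ v ∈ G.support, d < G.degree v
  · refine ⟨G, le_rfl, ?_, hdeg⟩
    rintro rfl
    simp at hG
  push Not at hdeg
  obtain ⟨v, hv, hd⟩ := hdeg
  have hlt : G.deleteIncidenceSet v < G := by
    refine (G.deleteIncidenceSet_le v).lt_of_ne fun h ↦ ?_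
    exact (G.support_deleteIncidenceSet_subset v (h.symm ▸ hv)).2 rfl
  have hsupport : ((G.deleteIncidenceSet v).support.ncard : ℝ) ≤ G.support.ncard - 1 := by
    rw [le_sub_iff_add_le]
    exact_mod_cast Set.ncard_lt_ncard
      ((G.support_deleteIncidenceSet_subset v).trans_ssubset (Set.sdiff_singleton_ssubset.2 hv))
  have hd0 : 0 ≤ d := (Nat.cast_nonneg _).trans hd
  obtain ⟨H, hle, hH⟩ := ih _ hlt <| by
    rw [ncard_edgeSet_deleteIncidenceSet]
    linarith [mul_le_mul_of_nonneg_left hsupport hd0]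
  exact ⟨H, hle.trans hlt.le, hH⟩

open scoped Classical in
theorem exists_isBipartite_forall_lt_degree {V : Type*} [Fintype V] {d : ℝ} (hd : 0 ≤ d)
    (G : SimpleGraph V) (hG : 2 * d * Fintype.card V < G.edgeSet.ncard) :
    ∃ H ≤ G, H.IsBipartite ∧ H ≠ ⊥ ∧ ∀ v ∈ H.support, d < H.degree v := by
  obtain ⟨B, hBG, hB, hcard⟩ := exists_isBipartite_ncard_edgeSet_le G
  have hcard' : (G.edgeSet.ncard : ℝ) ≤ 2 * B.edgeSet.ncard := by exact_mod_cast hcard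
  have hsupport : d * B.support.ncard ≤ d * Fintype.card V := by
    gcongr
    exact (Set.ncard_le_card _).trans_eq Nat.card_eq_fintype_card
  obtain ⟨H, hHB, hH⟩ := exists_le_forall_lt_degree d B (by linarith)
  exact ⟨H, hHB.trans hBG, hB.mono_left hHB, hH⟩

/-! ### Cycles with a chord -/

theorem exists_isPath_of_injOn {V : Type*} {G : SimpleGraph V} {g : ℕ → V} {l : ℕ}
    (hadj : ∀ i < l, G.Adj (g i) (g (i + 1))) (hinj : Set.InjOn g (Set.Iic l)) :
    ∃ w : G.Walk (g 0) (g l), w.IsPath ∧ w.length = l ∧ ∀ v ∈ w.support, v ∈ g '' Set.Iic l := by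
  induction l with
  | zero => exact ⟨.nil, .nil, rfl, by simp⟩
  | succ l ih =>
    have hsub : Set.Iic l ⊆ Set.Iic (l + 1) := Set.Iic_subset_Iic.2 l.le_succ
    obtain ⟨w, hw, hlen, hsupp⟩ := ih (fun i hi ↦ hadj i (hi.trans l.lt_succ_self))
      (hinj.mono hsub)
    have hnew : g (l + 1) ∉ w.support := fun hmem ↦ by
      obtain ⟨i, hi, heq⟩ := hsupp _ hmem
      have := hinj (hsub hi) Set.self_mem_Iic heq
      simp only [Set.mem_Iic] at hi
      lia
    refine ⟨w.concat (hadj l l.lt_succ_self), hw.concat hnew _, by simp [hlen], fun v hv ↦ ?_⟩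
    simp only [Walk.support_concat, List.mem_append, List.mem_singleton] at hv
    obtain hv | rfl := hv
    · exact Set.image_mono hsub (hsupp v hv)
    · exact Set.mem_image_of_mem g Set.self_mem_Iic

/-- The labelling `χ` takes equal values at the two ends of every path of length `l` inside `s`. -/
def IsPathInvariant {V α : Type*} (G : SimpleGraph V) (s : Set V) (l : ℕ) (χ : V → α) : Prop :=
  ∀ ⦃u v : V⦄ (w : G.Walk u v), w.IsPath → w.length = l → (∀ z ∈ w.support, z ∈ s) → χ u = χ v

/-- A cycle on `n` vertices with a chord: the vertices are enumerated periodically by the integers,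
consecutive ones are adjacent, and the chord joins the vertices numbered `0` and `r`. -/
structure ChordedCycle {V : Type*} (G : SimpleGraph V) (n r : ℤ) where
  /-- The periodic enumeration of the cycle. -/
  toFun : ℤ → V
  eq_iff : ∀ i j, toFun i = toFun j ↔ i ≡ j [ZMOD n]
  adj : ∀ i, G.Adj (toFun i) (toFun (i + 1))
  chord : G.Adj (toFun 0) (toFun r)

namespace ChordedCycle

variable {V : Type*} {G : SimpleGraph V} {n r : ℤ}

instance : CoeFun (ChordedCycle G n r) fun _ ↦ ℤ → V := ⟨toFun⟩

theorem periodic (c : ChordedCycle G n r) : Function.Periodic c n :=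
  fun _ ↦ (c.eq_iff _ _).2 Int.add_modEq_right

/-- The chorded cycle traversed backwards. -/
def reverse (c : ChordedCycle G n r) : ChordedCycle G n (n - r) where
  toFun i := c (-i)
  eq_iff i j := (c.eq_iff _ _).trans Int.neg_modEq_neg
  adj i := by simpa using (c.adj (-(i + 1))).symm
  chord := by
    rw [neg_sub, c.periodic.sub_eq, neg_zero]
    exact c.chord

theorem eq_of_adj_of_injOn {α : Type*} {l : ℕ} (c : ChordedCycle G n r) {χ : V → α}
    (hχ : IsPathInvariant G (Set.range c) l χ) {g : ℕ → ℤ}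
    (hadj : ∀ i < l, G.Adj (c (g i)) (c (g (i + 1))))
    (hinj : ∀ i ≤ l, ∀ j ≤ l, g i ≡ g j [ZMOD n] → i = j) : χ (c (g 0)) = χ (c (g l)) := by
  obtain ⟨w, hw, hlen, hsupp⟩ := exists_isPath_of_injOn (g := c ∘ g) hadj
    fun i hi j hj h ↦ hinj i hi j hj ((c.eq_iff _ _).1 h)
  refine hχ w hw hlen fun z hz ↦ ?_
  obtain ⟨i, -, rfl⟩ := hsupp z hz
  exact Set.mem_range_self (g i)

section Colouring

variable {α : Type*} {l : ℕ} {χ : V → α}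

theorem periodic_length (c : ChordedCycle G n r) (hln : l < n)
    (hχ : IsPathInvariant G (Set.range c) l χ) :
    Function.Periodic (χ ∘ c) l := by
  intro z
  have := c.eq_of_adj_of_injOn hχ (g := fun i ↦ z + i)
    (fun i _ ↦ by simpa [add_assoc] using c.adj (z + i)) fun i hi j hj hmod ↦ by
      have := Int.eq_zero_of_abs_lt_dvd hmod.dvd (abs_lt.2 (by constructor <;> lia))
      lia
  simpa using this.symm

-- The path walks from `-j` up to `0`, crosses the chord, and continues upwards from `r`.
theorem chord_shift (c : ChordedCycle G n r) (hlr : l ≤ r) (hrn : r + l ≤ n)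
    (hχ : IsPathInvariant G (Set.range c) l χ) {j : ℕ} (hj : j < l) :
    χ (c (-j)) = χ (c (r + l - 1 - j)) := by
  have := c.eq_of_adj_of_injOn hχ (g := fun i ↦ if i ≤ j then i - j else r + i - 1 - j)
    (fun i _ ↦ by
      obtain h | rfl | h := lt_trichotomy i j
      · simpa [h, h.le, Nat.succ_le_of_lt, sub_add_eq_add_sub] using c.adj (i - j)
      · simpa [add_sub_right_comm] using c.chord
      · have := c.adj (r + i - 1 - j)
        rw [if_neg h.not_ge, if_neg (by lia)]
        convert this using 2
        push_cast
        ring)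
    fun i hi j' hj' hmod ↦ by
      have h := Int.eq_zero_of_abs_lt_dvd hmod.dvd (abs_lt.2 (by split_ifs <;> constructor <;> lia))
      split_ifs at h <;> lia
  simpa [hj.not_ge] using this

theorem periodic_chord_sub_one (c : ChordedCycle G n r) (hl : 0 < l) (hlr : l ≤ r)
    (hrn : r + l ≤ n) (hχ : IsPathInvariant G (Set.range c) l χ) :
    Function.Periodic (χ ∘ c) (r - 1) := by
  have hper := c.periodic_length (by lia) hχ
  have hres (j : ℕ) (hj : j < l) : (χ ∘ c) (-j + (r - 1)) = (χ ∘ c) (-j) := by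
    rw [← hper]
    simp only [Function.comp_apply]
    rw [c.chord_shift hlr hrn hχ hj]
    congr 2
    ring
  intro z
  obtain ⟨j, hj⟩ := Int.eq_ofNat_of_zero_le (Int.emod_nonneg (-z) (b := l) (by lia))
  have hjl : j < l := by have := Int.emod_lt_of_pos (-z) (b := l) (by lia); lia
  have hz : z = -j + -(-z / l) * l := by
    have := Int.emod_add_mul_ediv (-z) l
    linarith
  have key := hper.int_mul (-(-z / l))
  rw [hz, add_right_comm]
  simp only [Int.cast_id] at key
  rw [key _, key _, hres j hjl]

theorem periodic_two (c : ChordedCycle G n r) (hl : 0 < l) (hlr : l ≤ r)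
    (hrn : r + l ≤ n) (hχ : IsPathInvariant G (Set.range c) l χ) :
    Function.Periodic (χ ∘ c) 2 := by
  have hsub := c.periodic_chord_sub_one hl hlr hrn hχ
  have hrev : Function.Periodic (χ ∘ c.reverse) (n - r - 1) :=
    c.reverse.periodic_chord_sub_one hl (by lia) (by lia) fun u v w hw hlen hsupp ↦
      hχ w hw hlen fun z hz ↦ by
        obtain ⟨i, rfl⟩ := hsupp z hz
        exact ⟨-i, rfl⟩
  have hadd : Function.Periodic (χ ∘ c) (r + 1) := fun z ↦ by
    have hz : χ (c (-(-z + (n - r - 1)))) = χ (c (- -z)) := hrev (-z)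
    rwa [show -(-z + (n - r - 1)) = z + (r + 1) - n by ring, c.periodic.sub_eq, neg_neg] at hz
  rw [show (2 : ℤ) = r + 1 - (r - 1) by ring]
  exact hadd.sub_period hsub

end Colouring

/-- A chorded cycle of a subgraph, as a chorded cycle of the whole graph. -/
def mono {H : SimpleGraph V} (c : ChordedCycle H n r) (h : H ≤ G) : ChordedCycle G n r where
  toFun := c
  eq_iff := c.eq_iff
  adj i := h (c.adj i)
  chord := h c.chord

/-- The cycle closing up the first `N + 1` vertices of a path, with a chord to its `r`-th vertex. -/
def ofIsPath {u v : V} {p : G.Walk u v} (hp : p.IsPath) {N r : ℕ} (hN : N ≤ p.length)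
    (hrN : r ≤ N) (hadjN : G.Adj u (p.getVert N)) (hadjr : G.Adj u (p.getVert r)) :
    ChordedCycle G (N + 1) r where
  toFun z := p.getVert (z % (N + 1)).toNat
  eq_iff i j := by
    have hle (z : ℤ) : (z % (N + 1)).toNat ≤ p.length := by
      have := Int.emod_lt_of_pos z (b := N + 1) (by lia)
      lia
    rw [hp.getVert_injOn.eq_iff (hle i) (hle j), ← Nat.cast_inj (R := ℤ),
      Int.toNat_of_nonneg (Int.emod_nonneg _ (by lia)),
      Int.toNat_of_nonneg (Int.emod_nonneg _ (by lia)), Int.ModEq]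
  adj i := by
    obtain ⟨a, ha⟩ := Int.eq_ofNat_of_zero_le (Int.emod_nonneg i (b := N + 1) (by lia))
    have hlt := Int.emod_lt_of_pos i (b := N + 1) (by lia)
    rw [← Int.emod_add_emod, ha]
    obtain h | rfl : a < N ∨ a = N := by lia
    · rw [Int.emod_eq_of_lt (by lia) (by lia)]
      exact p.adj_getVert_succ (h.trans_le hN)
    · simpa using hadjN.symm
  chord := by
    have hr : (r : ℤ) % (N + 1) = r := Int.emod_eq_of_lt (by lia) (by lia)
    simpa [hr] using hadjr

end ChordedCycle

theorem exists_mem_le_add_le_of_two_mul_le_card {N m : ℕ} (hm : 0 < m) {I : Finset ℕ}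
    (hI : I ⊆ Icc 1 N) (hcard : 2 * m ≤ #I) : ∃ r ∈ I, m ≤ r ∧ r + m ≤ N + 1 := by
  by_contra! hr
  have hsub : I ⊆ Ico 1 m ∪ Ioc (N + 1 - m) N := fun r hrI ↦ by
    have := mem_Icc.1 (hI hrI)
    have := hr r hrI
    simp only [mem_union, mem_Ico, mem_Ioc]
    lia
  have hle := (card_le_card hsub).trans (card_union_le _ _)
  have hN := card_le_card hI
  simp only [Nat.card_Ico, Nat.card_Ioc, Nat.card_Icc] at hle hN
  lia

open scoped Classical in
theorem exists_chordedCycle {V : Type*} [Fintype V] {G : SimpleGraph V} {m : ℕ} (hm : 0 < m)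
    (hG : G ≠ ⊥) (hdeg : ∀ v ∈ G.support, 2 * m ≤ G.degree v) :
    ∃ n r : ℤ, m ≤ r ∧ r + m ≤ n ∧ Nonempty (ChordedCycle G n r) := by
  obtain ⟨a, b, hab⟩ := G.ne_bot_iff_exists_adj.1 hG
  have : Nonempty V := ⟨a⟩
  obtain ⟨u, v, p, hp, hmax⟩ := Walk.exists_isPath_forall_isPath_length_le_length G
  have hnbr (w : V) (hw : G.Adj u w) : w ∈ p.support := by
    by_contra hmem
    have := hmax _ _ (p.cons hw.symm) (hp.cons hmem)
    simp at this
  have hu : u ∈ G.support := by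
    have hlen : 1 ≤ p.length := hmax _ _ hab.toWalk (by simp [Walk.cons_isPath_iff, hab.ne])
    exact ⟨_, by simpa using p.adj_getVert_succ hlen⟩
  let I : Finset ℕ := {i ∈ range (p.length + 1) | G.Adj u (p.getVert i)}
  have hcard : 2 * m ≤ #I := by
    refine (hdeg u hu).trans ((card_le_card fun w hw ↦ ?_).trans (card_image_le (f := p.getVert)))
    rw [mem_neighborFinset] at hw
    obtain ⟨i, rfl, hi⟩ := Walk.mem_support_iff_exists_getVert.1 (hnbr w hw)
    exact mem_image_of_mem _ (by simpa [I, Nat.lt_succ_iff] using ⟨hi, hw⟩)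
  obtain ⟨N, hNI, hNmax⟩ := I.exists_max_image id (card_pos.1 (by lia))
  have hI : I ⊆ Icc 1 N := fun i hi ↦ mem_Icc.2 ⟨Nat.pos_of_ne_zero ?_, hNmax i hi⟩
  · obtain ⟨r, hrI, hmr, hrN⟩ := exists_mem_le_add_le_of_two_mul_le_card hm hI hcard
    simp only [I, mem_filter, mem_range, Nat.lt_succ_iff] at hNI hrI
    exact ⟨N + 1, r, by lia, by lia, ⟨.ofIsPath hp hNI.1 (by lia) hNI.2 hrI.2⟩⟩
  · rintro rfl
    simp [I] at hi

/-! ### Edges between consecutive spheres -/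

variable {V : Type*} {G : SimpleGraph V}

theorem cycleGraph_isContained_of_isPath {a b : V} {p q : G.Walk a b} (hp : p.IsPath)
    (hq : q.IsPath) (hab : a ≠ b) (hlen : 2 < p.length + q.length)
    (hdisj : ∀ z ∈ p.support, z ∈ q.support → z = a ∨ z = b) :
    cycleGraph (p.length + q.length) ⊑ G := by
  have hstart {u v : V} {w : G.Walk u v} (hw : w.IsPath) : u ∉ w.support.tail :=
    (List.nodup_cons.1 (w.cons_tail_support.symm ▸ hw.support_nodup)).1
  have htails : p.support.tail.Disjoint q.reverse.support.tail := fun z hzp hzq ↦ by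
    have hzq' : z ∈ q.support := by simpa using List.mem_of_mem_tail hzq
    obtain rfl | rfl := hdisj z (List.mem_of_mem_tail hzp) hzq'
    · exact hstart hp hzp
    · exact hstart hq.reverse hzq
  have hcycle : (p.append q.reverse).IsCycle :=
    hp.isCycle_append hq.reverse htails (by rw [Walk.length_reverse]; lia)
  exact (cycleGraph_isContained_iff hlen).2 ⟨a, _, hcycle, by simp⟩

/-- The set of vertices at distance exactly `i` from `x`. The extended distance is used so that
vertices not reachable from `x` lie in no sphere. -/
def sphere (G : SimpleGraph V) (x : V) (i : ℕ) : Set V := {v | G.edist x v = i}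

theorem mem_sphere {x v : V} {i : ℕ} : v ∈ sphere G x i ↔ G.edist x v = i := Iff.rfl

theorem sphere_zero (x : V) : sphere G x 0 = {x} := by
  ext v
  rw [mem_sphere, Nat.cast_zero, edist_eq_zero_iff, Set.mem_singleton_iff, eq_comm]

theorem disjoint_sphere {x : V} {i j : ℕ} (hij : i ≠ j) :
    Disjoint (sphere G x i) (sphere G x j) :=
  Set.disjoint_left.2 fun v hi hj ↦ hij (by exact_mod_cast hi.symm.trans hj)

/-- `p` maps every vertex other than `x` that is reachable from `x` to a neighbour one step closer
to `x`: it is the parent map of a breadth-first search tree rooted at `x`. -/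
def IsParentMap (G : SimpleGraph V) (x : V) (p : V → V) : Prop :=
  ∀ ⦃i v⦄, v ∈ sphere G x (i + 1) → G.Adj v (p v) ∧ p v ∈ sphere G x i

theorem exists_isParentMap (G : SimpleGraph V) (x : V) : ∃ p, IsParentMap G x p := by
  have h (v : V) : ∃ u, ∀ i, v ∈ sphere G x (i + 1) → G.Adj v u ∧ u ∈ sphere G x i := by
    by_cases hv : ∃ i, v ∈ sphere G x (i + 1)
    · obtain ⟨i, hi⟩ := hv
      obtain ⟨w, hw⟩ := exists_walk_of_edist_eq_coe (G.edist_comm.trans hi)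
      cases w with | nil => simp at hw | @cons _ u _ hvu w =>
      have hu : u ∈ sphere G x i := by
        rw [mem_sphere] at hi ⊢
        have hle : G.edist x u ≤ i := by
          rw [edist_comm]
          simpa [show w.length = i by simpa using hw] using w.edist_le
        have htri := G.edist_triangle (u := x) (v := u) (w := v)
        rw [edist_eq_one_iff_adj.2 hvu.symm, hi] at htri
        exact hle.antisymm (by simpa using htri)
      refine ⟨u, fun j hj ↦ ⟨hvu, ?_⟩⟩
      obtain rfl : j = i := by simpa using hj.symm.trans hi
      exact hu
    · exact ⟨v, fun i hi ↦ (hv ⟨i, hi⟩).elim⟩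
  choose p hp using h
  exact ⟨p, fun i v ↦ hp v i⟩

theorem IsParentMap.iterate_mem_sphere {x v : V} {p : V → V} (hp : IsParentMap G x p) {i t : ℕ}
    (hv : v ∈ sphere G x (i + t)) : p^[t] v ∈ sphere G x i := by
  induction t generalizing v with
  | zero => exact hv
  | succ t ih => exact ih (hp hv).2

theorem IsParentMap.exists_isPath {x a b : V} {p : V → V} (hp : IsParentMap G x p) {i t : ℕ}
    (ha : a ∈ sphere G x i) (hb : b ∈ sphere G x i) (hti : t ≤ i) (heq : p^[t] a = p^[t] b)
    (hne : ∀ s < t, p^[s] a ≠ p^[s] b) :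
    ∃ w : G.Walk a b, w.IsPath ∧ w.length = 2 * t ∧
      ∀ z ∈ w.support, z = a ∨ z = b ∨ G.edist x z < i := by
  induction t generalizing i a b with
  | zero =>
    obtain rfl : a = b := heq
    exact ⟨.nil, .nil, rfl, by simp⟩
  | succ t ih =>
    obtain ⟨i, rfl⟩ := Nat.exists_eq_add_one_of_ne_zero (by lia : i ≠ 0)
    obtain ⟨haa, ha'⟩ := hp ha
    obtain ⟨hbb, hb'⟩ := hp hb
    obtain ⟨w, hw, hlen, hsupp⟩ := ih ha' hb' (by lia) heq fun s hs ↦ hne (s + 1) (by lia)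
    have hlower {z : V} (hz : z ∈ w.support) : G.edist x z < (i + 1 : ℕ) := by
      have hi : (i : ℕ∞) < (i + 1 : ℕ) := by exact_mod_cast i.lt_succ_self
      obtain rfl | rfl | hlt := hsupp z hz
      · exact ha'.trans_lt hi
      · exact hb'.trans_lt hi
      · exact hlt.trans hi
    have haw : a ∉ w.support := fun h ↦ (hlower h).ne ha
    have hbw : b ∉ w.support := fun h ↦ (hlower h).ne hb
    have hab : a ≠ b := hne 0 t.succ_pos
    refine ⟨.cons haa (w.concat hbb.symm), (hw.concat hbw _).cons (by simp [haw, hab]),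
      by rw [Walk.length_cons, Walk.length_concat, hlen]; ring, fun z hz ↦ ?_⟩
    simp only [Walk.support_cons, Walk.support_concat, List.mem_cons, List.mem_append,
      List.not_mem_nil, or_false] at hz
    obtain rfl | hz | rfl := hz
    exacts [.inl rfl, .inr (.inr (hlower hz)), .inr (.inl rfl)]

theorem exists_lt_subsingleton_image_iterate_succ {α : Type*} {f : α → α} {A : Set α}
    (hA : A.Nontrivial) {i : ℕ} (hi : (f^[i] '' A).Subsingleton) :
    ∃ t < i, ¬ (f^[t] '' A).Subsingleton ∧ (f^[t + 1] '' A).Subsingleton := by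
  classical
  have hex : ∃ j, (f^[j] '' A).Subsingleton := ⟨i, hi⟩
  have hpos : Nat.find hex ≠ 0 := fun h0 ↦ by
    have := Nat.find_spec hex
    rw [h0, Function.iterate_zero, Set.image_id] at this
    exact hA.not_subsingleton this
  obtain ⟨t, ht⟩ := Nat.exists_eq_add_one_of_ne_zero hpos
  refine ⟨t, ?_, Nat.find_min hex (by lia), ht ▸ Nat.find_spec hex⟩
  have := Nat.find_min' hex hi
  lia

theorem mem_iff_mem_of_isBipartiteWith {s t : Set V} (hG : G.IsBipartiteWith s t) {u v : V}
    (w : G.Walk u v) (hw : Even w.length) : u ∈ s ↔ v ∈ s := by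
  classical
  let side : G.Coloring Bool := Coloring.mk (fun v ↦ decide (v ∈ s)) fun {a b} hab ↦ by
    obtain ⟨ha, hb⟩ | ⟨ha, hb⟩ := hG.mem_of_adj hab
    · simp [ha, hG.disjoint.notMem_of_mem_right hb]
    · simp [hb, hG.disjoint.notMem_of_mem_right ha]
  have h := (side.even_length_iff_congr w).1 hw
  simpa only [side, Coloring.mk, RelHom.coeFn_mk, decide_eq_true_eq] using h

/-- The bipartite graph formed by the edges between the spheres of radii `i` and `i + 1`. -/
abbrev layer (G : SimpleGraph V) (x : V) (i : ℕ) : SimpleGraph V :=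
  G.between (sphere G x i) (sphere G x (i + 1))

section Layer

variable {x : V} {p : V → V} {i k : ℕ} {n r : ℤ}

theorem layer_isBipartiteWith :
    (layer G x i).IsBipartiteWith (sphere G x i) (sphere G x (i + 1)) :=
  between_isBipartiteWith (disjoint_sphere i.lt_succ_self.ne)

theorem le_edist_of_mem_support_layer {a b : V} (w : (layer G x i).Walk a b)
    (ha : a ∈ sphere G x i) : ∀ z ∈ w.support, (i : ℕ∞) ≤ G.edist x z := by
  have hmem {u v : V} (w : (layer G x i).Walk u v) (hu : (i : ℕ∞) ≤ G.edist x u) :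
      ∀ z ∈ w.support, (i : ℕ∞) ≤ G.edist x z := by
    induction w with
    | nil => simpa using hu
    | cons h w ih =>
      have hi : (i : ℕ∞) ≤ (i + 1 : ℕ) := by exact_mod_cast i.le_succ
      have hv := h.2.elim (fun h ↦ hi.trans h.2.ge) fun h ↦ h.2.ge
      simpa [hu] using ih hv
  exact hmem w ha.ge

-- Two vertices of the sphere with different labels are joined by a path of length `2 * (t + 1)`
-- through the tree; a path of the complementary length in the layer would close up a `2 * k`-cycle.
open scoped Classical in
theorem IsParentMap.isPathInvariant (hp : IsParentMap G x p) (hG : (cycleGraph (2 * k)).Free G)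
    {t : ℕ} {s : Set V} (ht : t < i) (hik : i < k)
    (hs : (p^[t + 1] '' (s ∩ sphere G x i)).Subsingleton) :
    IsPathInvariant (layer G x i) s (2 * (k - (t + 1)))
      fun v ↦ if v ∈ sphere G x i then some (p^[t] v) else none := by
  intro a b w hw hlen hsupp
  have hiff := mem_iff_mem_of_isBipartiteWith layer_isBipartiteWith w (hlen ▸ even_two_mul _)
  by_cases ha : a ∈ sphere G x i
  swap
  · simp only [if_neg ha, if_neg (hiff.not.1 ha)]
  have hb := hiff.1 ha
  simp only [if_pos ha, if_pos hb, Option.some_inj]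
  by_contra hne
  have heq : p^[t + 1] a = p^[t + 1] b := hs
    (Set.mem_image_of_mem _ ⟨hsupp a w.start_mem_support, ha⟩)
    (Set.mem_image_of_mem _ ⟨hsupp b w.end_mem_support, hb⟩)
  have hne' (j : ℕ) (hj : j < t + 1) : p^[j] a ≠ p^[j] b := fun h ↦ hne <| by
    rw [← Nat.sub_add_cancel (Nat.le_of_lt_succ hj), Function.iterate_add_apply, h,
      ← Function.iterate_add_apply]
  obtain ⟨q, hq, hqlen, hqsupp⟩ := hp.exists_isPath ha hb ht heq hne'
  have hcycle := cycleGraph_isContained_of_isPath (hw.mapLe between_le) hq (hne' 0 t.succ_pos)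
    (by rw [Walk.length_mapLe]; lia) fun z hzw hzq ↦ by
      rw [Walk.support_mapLe_eq_support] at hzw
      obtain h | h | h := hqsupp z hzq
      exacts [.inl h, .inr h, absurd h (le_edist_of_mem_support_layer w ha z hzw).not_gt]
  rw [Walk.length_mapLe, hlen, hqlen, show 2 * (k - (t + 1)) + 2 * (t + 1) = 2 * k by lia] at hcycle
  exact hG hcycle

theorem isEmpty_chordedCycle_layer (hG : (cycleGraph (2 * k)).Free G) (hik : i < k)
    (hr : 2 * k ≤ r) (hrn : r + 2 * k ≤ n) : IsEmpty (ChordedCycle (layer G x i) n r) := by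
  classical
  refine ⟨fun c ↦ ?_⟩
  obtain ⟨p, hp⟩ := exists_isParentMap G x
  have hup {z : ℤ} (hz : c z ∈ sphere G x i) : c (z + 1) ∈ sphere G x (i + 1) :=
    layer_isBipartiteWith.mem_of_mem_adj hz (c.adj z)
  have hdown {z : ℤ} (hz : c z ∈ sphere G x (i + 1)) : c (z + 1) ∈ sphere G x i :=
    layer_isBipartiteWith.mem_of_mem_adj' hz (c.adj z).symm
  have hA : (Set.range c ∩ sphere G x i).Nontrivial := by
    obtain ⟨z, hz⟩ : ∃ z, c z ∈ sphere G x i :=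
      (c.adj 0).2.elim (fun h ↦ ⟨0, h.1⟩) fun h ↦ ⟨1, h.2⟩
    refine ⟨_, ⟨⟨z, rfl⟩, hz⟩, _, ⟨⟨z + 1 + 1, rfl⟩, hdown (hup hz)⟩, fun h ↦ ?_⟩
    have := Int.le_of_dvd (by lia) ((c.eq_iff _ _).1 h).dvd
    lia
  have hroot : (p^[i] '' (Set.range c ∩ sphere G x i)).Subsingleton := by
    refine Set.subsingleton_singleton.anti (t := {x}) (Set.image_subset_iff.2 fun v hv ↦ ?_)
    rw [Set.mem_preimage, ← sphere_zero (G := G)]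
    exact hp.iterate_mem_sphere (by simpa using hv.2)
  obtain ⟨t, hti, hnt, hs⟩ := exists_lt_subsingleton_image_iterate_succ hA hroot
  have hper := c.periodic_two (by lia) (by lia) (by lia) (hp.isPathInvariant hG hti hik hs)
  refine hnt ?_
  rintro _ ⟨_, ⟨⟨y, rfl⟩, hy⟩, rfl⟩ _ ⟨_, ⟨⟨z, rfl⟩, hz⟩, rfl⟩
  obtain ⟨d, hd | hd⟩ := Int.even_or_odd' (z - y)
  · obtain rfl : z = y + d • 2 := by rw [smul_eq_mul]; lia
    have heq := hper.zsmul d y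
    simp only [Function.comp_apply, if_pos hy, if_pos hz, Option.some_inj] at heq
    exact heq.symm
  · obtain rfl : z = y + 1 + d • 2 := by rw [smul_eq_mul]; lia
    have hy' := (disjoint_sphere i.lt_succ_self.ne).notMem_of_mem_right (hup hy)
    have heq := hper.zsmul d (y + 1)
    simp only [Function.comp_apply, if_neg hy', if_pos hz, reduceCtorEq] at heq

theorem ncard_edgeSet_layer_le [Finite V] (hG : (cycleGraph (2 * k)).Free G) (hik : i < k) :
    ((layer G x i).edgeSet.ncard : ℝ) ≤
      4 * k * ((sphere G x i).ncard + (sphere G x (i + 1)).ncard) := by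
  classical
  have := Fintype.ofFinite V
  by_contra! hlt
  have hsupport : (layer G x i).support.ncard ≤
      (sphere G x i).ncard + (sphere G x (i + 1)).ncard :=
    (Set.ncard_le_ncard (isBipartiteWith_support_subset layer_isBipartiteWith)).trans
      (Set.ncard_union_le _ _)
  have hdense : (4 * k : ℝ) * (layer G x i).support.ncard < (layer G x i).edgeSet.ncard := by
    refine lt_of_le_of_lt ?_ hlt
    gcongr
    exact_mod_cast hsupport
  obtain ⟨H, hle, hne, hdeg⟩ := exists_le_forall_lt_degree _ _ hdense
  obtain ⟨n, r, hr, hrn, ⟨c⟩⟩ := exists_chordedCycle (m := 2 * k) (by lia) hne fun v hv ↦ by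
    have : 4 * k < H.degree v := by exact_mod_cast hdeg v hv
    lia
  exact (isEmpty_chordedCycle_layer hG hik (by exact_mod_cast hr) (by exact_mod_cast hrn)).false
    (c.mono hle)

end Layer

/-! ### Growth of spheres -/

section Growth

variable {x : V} {i k : ℕ}

theorem mem_sphere_of_adj (hG : G.IsBipartite) {v w : V} (hv : v ∈ sphere G x i)
    (hvw : G.Adj v w) : w ∈ sphere G x (i + 1) ∨ ∃ j, i = j + 1 ∧ w ∈ sphere G x j := by
  have hup : G.edist x w ≤ (i + 1 : ℕ) := by
    simpa [mem_sphere.1 hv, edist_eq_one_iff_adj.2 hvw] using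
      G.edist_triangle (u := x) (v := v) (w := w)
  have hdown : (i : ℕ∞) ≤ G.edist x w + 1 := by
    simpa [mem_sphere.1 hv, edist_eq_one_iff_adj.2 hvw.symm] using
      G.edist_triangle (u := x) (v := w) (w := v)
  obtain ⟨j, hj⟩ := ENat.ne_top_iff_exists.1 (hup.trans_lt (ENat.natCast_lt_top _)).ne
  rw [← hj] at hup hdown
  norm_cast at hup hdown
  have hne : j ≠ i := by
    rintro rfl
    obtain ⟨p, hp⟩ := exists_walk_of_edist_eq_coe hv
    obtain ⟨q, hq⟩ := exists_walk_of_edist_eq_coe hj.symm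
    have heven := two_colorable_iff_forall_loop_even.1 hG _ (p.append (q.reverse.cons hvw))
    simp only [Walk.length_append, Walk.length_cons, Walk.length_reverse, hp, hq] at heven
    exact Nat.not_even_two_mul_add_one j (by rwa [two_mul, add_assoc])
  obtain rfl | rfl : j = i + 1 ∨ i = j + 1 := by lia
  exacts [.inl hj.symm, .inr ⟨j, rfl, hj.symm⟩]

variable [Fintype V]

open scoped Classical in
theorem degree_le_degree_layer_add (hG : G.IsBipartite) {v : V} (hv : v ∈ sphere G x (i + 1)) :
    G.degree v ≤ (layer G x i).degree v + (layer G x (i + 1)).degree v := by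
  refine (card_le_card (t := (layer G x i).neighborFinset v ∪ (layer G x (i + 1)).neighborFinset v)
    fun w hw ↦ ?_).trans (card_union_le _ _)
  rw [mem_neighborFinset] at hw
  simp only [mem_union, mem_neighborFinset]
  obtain h | ⟨j, hj, h⟩ := mem_sphere_of_adj hG hv hw
  · exact .inr ⟨hw, .inl ⟨hv, h⟩⟩
  · obtain rfl : i = j := by lia
    exact .inl ⟨hw, .inr ⟨hv, h⟩⟩

open scoped Classical in
theorem sum_degree_layer : ∑ v ∈ (sphere G x i).toFinset, (layer G x i).degree v =
    (layer G x i).edgeSet.ncard := by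
  rw [Set.ncard_eq_toFinset_card']
  exact isBipartiteWith_sum_degrees_eq_card_edges (t := (sphere G x (i + 1)).toFinset)
    (by simpa only [Set.coe_toFinset] using layer_isBipartiteWith)

open scoped Classical in
theorem sum_degree_layer_succ : ∑ v ∈ (sphere G x (i + 1)).toFinset, (layer G x i).degree v =
    (layer G x i).edgeSet.ncard := by
  rw [Set.ncard_eq_toFinset_card']
  exact isBipartiteWith_sum_degrees_eq_card_edges' (s := (sphere G x i).toFinset)
    (by simpa only [Set.coe_toFinset] using layer_isBipartiteWith)

open scoped Classical in
theorem mul_ncard_sphere_succ_le (hG : G.IsBipartite) {d : ℝ}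
    (hdeg : ∀ v ∈ sphere G x (i + 1), d ≤ G.degree v) :
    d * (sphere G x (i + 1)).ncard ≤
      (layer G x i).edgeSet.ncard + (layer G x (i + 1)).edgeSet.ncard := by
  rw [← sum_degree_layer_succ, ← sum_degree_layer, Set.ncard_eq_toFinset_card', mul_comm,
    ← nsmul_eq_mul]
  norm_cast
  rw [← sum_add_distrib]
  push_cast
  refine card_nsmul_le_sum _ _ _ fun v hv ↦ ?_
  rw [Set.mem_toFinset] at hv
  exact (hdeg v hv).trans (by exact_mod_cast degree_le_degree_layer_add hG hv)

open scoped Classical in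
theorem degree_le_ncard_edgeSet_layer_zero : G.degree x ≤ (layer G x 0).edgeSet.ncard := by
  rw [← sum_degree_layer]
  simp only [sphere_zero, Set.toFinset_singleton, sum_singleton]
  refine card_le_card fun w hw ↦ ?_
  rw [mem_neighborFinset] at hw ⊢
  exact ⟨hw, .inl ⟨by simp [sphere_zero], by simpa [mem_sphere] using hw⟩⟩

open scoped Classical in
theorem mul_ncard_sphere_le (hG : G.IsBipartite) (hfree : (cycleGraph (2 * k)).Free G) {ρ : ℝ}
    (hρ : 1 ≤ ρ) (hdeg : ∀ v ∈ G.support, 4 * k * (ρ + 3) ≤ G.degree v) (hx : x ∈ G.support)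
    (hik : i < k) : ρ * (sphere G x i).ncard ≤ (sphere G x (i + 1)).ncard := by
  have hk : (0 : ℝ) < 4 * k := mul_pos four_pos (Nat.cast_pos.2 (Nat.zero_lt_of_lt hik))
  induction i with
  | zero =>
    have hle := (hdeg x hx).trans (Nat.cast_le.2 degree_le_ncard_edgeSet_layer_zero)
    have hcancel := le_of_mul_le_mul_left (hle.trans (ncard_edgeSet_layer_le hfree hik)) hk
    rw [sphere_zero, Set.ncard_singleton, Nat.cast_one, zero_add] at hcancel ⊢
    linarith
  | succ i ih =>
    have hprev : (sphere G x i).ncard ≤ ρ * (sphere G x i).ncard :=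
      le_mul_of_one_le_left (Nat.cast_nonneg _) hρ
    obtain ⟨p, hp⟩ := exists_isParentMap G x
    have hle := calc
      4 * k * (ρ + 3) * (sphere G x (i + 1)).ncard
      _ ≤ (layer G x i).edgeSet.ncard + (layer G x (i + 1)).edgeSet.ncard :=
        mul_ncard_sphere_succ_le hG fun v hv ↦ hdeg v ⟨p v, (hp hv).1⟩
      _ ≤ _ := add_le_add (ncard_edgeSet_layer_le hfree (by lia)) (ncard_edgeSet_layer_le hfree hik)
    rw [← mul_add, mul_assoc] at hle
    linarith [le_of_mul_le_mul_left hle hk, ih (by lia)]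

open scoped Classical in
theorem pow_le_ncard_sphere (hG : G.IsBipartite) (hfree : (cycleGraph (2 * k)).Free G) {ρ : ℝ}
    (hρ : 1 ≤ ρ) (hdeg : ∀ v ∈ G.support, 4 * k * (ρ + 3) ≤ G.degree v) (hx : x ∈ G.support)
    (hik : i ≤ k) : ρ ^ i ≤ (sphere G x i).ncard := by
  induction i with
  | zero => simp [sphere_zero]
  | succ i ih =>
    calc ρ ^ (i + 1) = ρ * ρ ^ i := pow_succ' ρ i
      _ ≤ ρ * (sphere G x i).ncard := by gcongr; exact ih (by lia)
      _ ≤ (sphere G x (i + 1)).ncard := mul_ncard_sphere_le hG hfree hρ hdeg hx hik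

end Growth

theorem ncard_edgeSet_le_of_cycleGraph_free [Fintype V] {k : ℕ} (hk : k ≠ 0)
    (hG : (cycleGraph (2 * k)).Free G) :
    (G.edgeSet.ncard : ℝ) ≤ 40 * k * (Fintype.card V : ℝ) ^ (1 + 1 / (k : ℝ)) := by
  classical
  by_contra! hlt
  have hV : Nonempty V := by
    by_contra! h
    rw [Subsingleton.elim G ⊥, edgeSet_bot, Set.ncard_empty, Nat.cast_zero] at hlt
    exact hlt.not_ge (by positivity)
  have hk' : (1 : ℝ) ≤ k := by exact_mod_cast Nat.one_le_iff_ne_zero.2 hk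
  obtain ⟨q, hq⟩ : ∃ q : ℝ, q = (Fintype.card V : ℝ) ^ (1 / (k : ℝ)) := ⟨_, rfl⟩
  have hq_one : 1 ≤ q := hq ▸ Real.one_le_rpow (by exact_mod_cast Fintype.card_pos) (by positivity)
  have hq_pow : q ^ k = Fintype.card V := by simp [hq, Real.rpow_inv_natCast_pow, hk]
  rw [Real.rpow_one_add' (by positivity) (by positivity), ← hq] at hlt
  obtain ⟨H, hHG, hbip, hne, hdeg⟩ :=
    exists_isBipartite_forall_lt_degree (d := 20 * k * q) (by positivity) G (by linarith)
  obtain ⟨x, y, hxy⟩ := H.ne_bot_iff_exists_adj.1 hne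
  have hd : 4 * k * (q + 1 + 3) ≤ 20 * k * q := by nlinarith
  have hgrow : (q + 1) ^ k ≤ (sphere H x k).ncard :=
    pow_le_ncard_sphere hbip (fun h ↦ hG (h.mono_right hHG)) (by linarith)
      (fun v hv ↦ hd.trans (hdeg v hv).le) ⟨y, hxy⟩ le_rfl
  have hle : (q + 1) ^ k ≤ q ^ k := by
    rw [hq_pow, ← Nat.card_eq_fintype_card]
    exact hgrow.trans (by exact_mod_cast Set.ncard_le_card _)
  exact hle.not_gt (pow_lt_pow_left₀ (lt_add_one q) (by linarith) hk)

end BondySimonovits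

theorem stmt_5_general {V : Type*} [Fintype V] (G : SimpleGraph V) {k : ℕ} (hk : 2 ≤ k)
    (hG : 40 * k * (Fintype.card V : ℝ) ^ (1 + 1 / (k : ℝ)) < G.edgeSet.ncard) :
    ∃ (v : V) (w : G.Walk v v), w.IsCycle ∧ w.length = 2 * k := by
  rw [← SimpleGraph.cycleGraph_isContained_iff (by lia)]
  by_contra hfree
  exact hG.not_ge (BondySimonovits.ncard_edgeSet_le_of_cycleGraph_free (by lia) hfree)

/-- Bondy–Simonovits: there is a constant c > 0 such that for
every k ≥ 2 and every n, every simple graph on n vertices with more than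
c·k·n^{1+1/k} edges contains a cycle of length exactly 2k. -/
theorem stmt_5 :
    ∃ c : ℝ, 0 < c ∧ ∀ k n : ℕ, 2 ≤ k → ∀ G : SimpleGraph (Fin n),
      c * k * (n : ℝ) ^ (1 + 1 / (k : ℝ)) < (G.edgeSet.ncard : ℝ) →
      ∃ (v : Fin n) (w : G.Walk v v), w.IsCycle ∧ w.length = 2 * k :=
  ⟨40, by norm_num, fun k n hk G hG ↦ stmt_5_general G hk (by rwa [Fintype.card_fin])⟩
end

section
/- Every simple graph on n vertices can be decomposed into at most ⌊n/2⌋ edge-disjoint subgraphs, each of which is a path or a cycle, whose edge sets partition the edge set of the graph. -/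
/-!
Let `x` be a vertex with some neighbours of even degree, delete the edges from `x` to all of them,
and decompose what is left by induction on the number of edges. Every neighbour of `x` now has odd
degree, hence is an end of a path. The deleted edges can be inserted again without new members: to
insert `xy`, take a path ending at `y`. If it avoids `x`, prolong it to `x`; if its other end is
`x`, close it to a cycle; if it reaches `x` by an edge `zx`, replace `zx` by `xy`, which leaves `zx`
to be inserted instead. The neighbour `y` is not used again, so this terminates.

If all degrees are odd, the number of non-isolated vertices is even. An edge at a vertex of degree
one is a member of its own: removing it isolates a vertex, so by parity the bound drops by one.
Otherwise one end of an edge is moved to a new vertex, which makes a degree even and leaves the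
bound unchanged, again by parity, and after the decomposition the end is moved back by the insertion
above. This is why the induction takes place in an infinite host graph.
-/

namespace LovaszDecomposition

open Multiset SimpleGraph SimpleGraph.Walk
open scoped Finset

variable {V W : Type*} {G : SimpleGraph V} {H : SimpleGraph W}

/-- Walks of `G` with unspecified ends. -/
abbrev AnyWalk (G : SimpleGraph V) : Type _ :=
  Σ (u : V) (v : V), G.Walk u v

/-- The members allowed in a path/cycle decomposition. A cycle is a closed walk, so its two ends
have to be identified before `IsCycle` applies. -/
def IsPathOrCycle (P : AnyWalk G) : Prop :=
  P.2.2.IsPath ∨ ∃ h : P.2.1 = P.1, (P.2.2.copy rfl h).IsCycle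

/-- The edges of a family of walks, with multiplicity. -/
def edges (D : Multiset (AnyWalk G)) : Multiset (Sym2 V) :=
  D.bind fun P ↦ P.2.2.edges

/-- `D` is a decomposition of the edge set `E` into paths and cycles of the host graph `G`. Since
`E.val` has no repetitions, the members of `D` are edge-disjoint. -/
structure IsDecomposition (D : Multiset (AnyWalk G)) (E : Finset (Sym2 V)) : Prop where
  isPathOrCycle : ∀ P ∈ D, IsPathOrCycle P
  edges_eq : edges D = E.val

/-- `p` is a member of `D`, up to orientation. -/
def Traverses (D : Multiset (AnyWalk G)) {u v : V} (p : G.Walk u v) : Prop :=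
  ⟨u, v, p⟩ ∈ D ∨ ⟨v, u, p.reverse⟩ ∈ D

/-- The same walk, run backwards. -/
def AnyWalk.reverse (P : AnyWalk G) : AnyWalk G :=
  ⟨P.2.1, P.1, P.2.2.reverse⟩

lemma edges_cons (P : AnyWalk G) (D : Multiset (AnyWalk G)) :
    edges (P ::ₘ D) = P.2.2.edges + edges D :=
  cons_bind ..

lemma mem_edges {D : Multiset (AnyWalk G)} {e : Sym2 V} :
    e ∈ edges D ↔ ∃ P ∈ D, e ∈ P.2.2.edges := by
  simp [edges]

lemma Traverses.mem_edges {D : Multiset (AnyWalk G)} {u v : V} {p : G.Walk u v}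
    (hp : Traverses D p) {e : Sym2 V} (he : e ∈ p.edges) : e ∈ edges D := by
  rcases hp with hp | hp
  · exact LovaszDecomposition.mem_edges.2 ⟨_, hp, he⟩
  · exact LovaszDecomposition.mem_edges.2 ⟨_, hp, by simpa using he⟩

lemma traverses_cons {P : AnyWalk G} {D : Multiset (AnyWalk G)} {u v : V} {p : G.Walk u v} :
    Traverses (P ::ₘ D) p ↔
      Traverses D p ∨ (⟨u, v, p⟩ : AnyWalk G) = P ∨ (⟨v, u, p.reverse⟩ : AnyWalk G) = P := by
  simp only [Traverses, mem_cons]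
  tauto

lemma IsPathOrCycle.isTrail {P : AnyWalk G} (hP : IsPathOrCycle P) : P.2.2.IsTrail := by
  obtain ⟨u, v, p⟩ := P
  rcases hP with hp | ⟨h, hp⟩
  · exact hp.isTrail
  · obtain rfl : v = u := h
    exact hp.isTrail

lemma Traverses.exists_reorient {D : Multiset (AnyWalk G)} {u v : V} {p : G.Walk u v}
    (hp : Traverses D p) :
    ∃ D₀ ≤ D, card D = card (⟨u, v, p⟩ ::ₘ D₀) ∧ edges D = edges (⟨u, v, p⟩ ::ₘ D₀) ∧
      ∀ {a b : V} {q : G.Walk a b}, Traverses D q → Traverses (⟨u, v, p⟩ ::ₘ D₀) q := by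
  rcases hp with hp | hp <;> obtain ⟨D₀, rfl⟩ := exists_cons_of_mem hp
  · exact ⟨D₀, le_cons_self .., rfl, rfl, id⟩
  · refine ⟨D₀, le_cons_self .., by simp, by simp [edges_cons], fun {a b q} hq ↦ ?_⟩
    rw [traverses_cons] at hq ⊢
    refine hq.imp_right fun h ↦ ?_
    have h' := h.imp (congrArg AnyWalk.reverse) (congrArg AnyWalk.reverse)
    simpa [AnyWalk.reverse, or_comm] using h'

section Parity

variable [DecidableEq V]

lemma IsPathOrCycle.exists_isPath_of_odd_countP {P : AnyWalk G} (hP : IsPathOrCycle P) {v : V}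
    (hodd : Odd (P.2.2.edges.countP (v ∈ ·))) :
    ∃ w ≠ v, ∃ p : G.Walk v w, p.IsPath ∧ Traverses {P} p := by
  obtain ⟨a, b, p⟩ := P
  have hends : a ≠ b ∧ (v = a ∨ v = b) := by
    rw [← Nat.not_even_iff_odd, hP.isTrail.even_countP_edges_iff] at hodd
    tauto
  have hp : p.IsPath := hP.resolve_right fun ⟨h, _⟩ ↦ hends.1 h.symm
  rcases hends with ⟨hab, rfl | rfl⟩
  · exact ⟨b, hab.symm, p, hp, .inl (mem_singleton_self _)⟩
  · exact ⟨a, hab, p.reverse, hp.reverse, .inr (by simp)⟩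

lemma exists_isPath_of_odd_countP {D : Multiset (AnyWalk G)} (hD : ∀ P ∈ D, IsPathOrCycle P)
    {v : V} (hodd : Odd ((edges D).countP (v ∈ ·))) :
    ∃ w ≠ v, ∃ p : G.Walk v w, p.IsPath ∧ Traverses D p := by
  obtain ⟨P, hP, hPodd⟩ : ∃ P ∈ D, Odd (P.2.2.edges.countP (v ∈ ·)) := by
    by_contra! h_even
    refine Nat.not_even_iff_odd.2 hodd ?_
    rw [edges, Multiset.bind, Multiset.join, ← coe_countPAddMonoidHom, map_multiset_sum,
      Multiset.map_map]
    refine even_iff_two_dvd.2 (dvd_sum fun k hk ↦ ?_)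
    obtain ⟨P, hP, rfl⟩ := mem_map.1 hk
    simpa [even_iff_two_dvd] using h_even P hP
  obtain ⟨w, hw, p, hp, hpP⟩ := (hD P hP).exists_isPath_of_odd_countP hPodd
  have hle : {P} ≤ D := singleton_le.2 hP
  exact ⟨w, hw, p, hp, hpP.imp (mem_of_le hle) (mem_of_le hle)⟩

end Parity

lemma append_left_cancel_of_isPath {u x v : V} {p p' : G.Walk u x} {q q' : G.Walk x v}
    (hp : (p.append q).IsPath) (h : p.append q = p'.append q') : p = p' := by
  classical
  have takeUntil_eq {r : G.Walk u x} {s : G.Walk x v} (hrs : (r.append s).IsPath) :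
      (r.append s).takeUntil x (by simp) = r := by
    have hnil : r.dropUntil x r.end_mem_support = nil :=
      (isPath_iff_nil.1 (hrs.of_append_left.dropUntil _)).eq_nil
    rw [takeUntil_append_of_mem_left _ _ r.end_mem_support]
    simpa [hnil] using r.take_spec r.end_mem_support
  calc p = (p.append q).takeUntil x (by simp) := (takeUntil_eq hp).symm
    _ = (p'.append q').takeUntil x (by simp) := by simp only [h]
    _ = p' := takeUntil_eq (h ▸ hp)

lemma reverse_append_cons {u y z v : V} (q : G.Walk u y) (h : G.Adj y z) (r : G.Walk z v) :
    (q.append (cons h r)).reverse = r.reverse.append (cons h.symm q.reverse) := by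
  rw [reverse_append, reverse_cons, ← append_assoc, cons_append, nil_append]

lemma isPath_reverse_append_cons {x y z w : V} {q : G.Walk y z} {hzx : G.Adj z x} {r : G.Walk x w}
    (hp : (q.append (cons hzx r)).IsPath) (hyx : G.Adj y x) :
    (q.reverse.append (cons hyx r)).IsPath := by
  rw [isPath_def] at hp ⊢
  rw [support_append] at hp ⊢
  simpa [List.nodup_append, support_reverse] using hp

section Star

variable {E : Finset (Sym2 V)} {x y w z : V} {U A A' : Finset V}
  {D D₀ : Multiset (AnyWalk G)}

/-- The edges joining `x` to the vertices of `A`. -/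
def star (x : V) (A : Finset V) : Finset (Sym2 V) :=
  A.map (Sym2.mkEmbedding x)

lemma mem_star {e : Sym2 V} : e ∈ star x A ↔ ∃ a ∈ A, s(x, a) = e := by
  simp only [star, Finset.mem_map, Sym2.mkEmbedding_apply]

lemma mk_mem_star : s(x, y) ∈ star x A ↔ y ∈ A := by
  simp only [mem_star, Sym2.congr_right, exists_eq_right]

lemma cons_star_erase [DecidableEq V] (hy : y ∈ A) :
    s(x, y) ::ₘ (star x (A.erase y)).val = (star x A).val := by
  have hnotMem : s(x, y) ∉ star x (A.erase y) := by simp [mk_mem_star]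
  rw [← Finset.insert_val_of_notMem hnotMem]
  conv_rhs => rw [star, ← Finset.insert_erase hy, Finset.map_insert]
  rfl

/-- `p` reaches `x`, if at all, at its last vertex or by an edge coming from `U`. -/
def EntersFrom (U : Finset V) (x : V) {v w : V} (p : G.Walk v w) : Prop :=
  w = x ∨ ∀ (q : G.Walk v x) (r : G.Walk x w), p = q.append r → q.penultimate ∈ U

/-- A stage in the insertion of the edges of a star with centre `x`. The family `D` covers `E`
except for the edges from `x` to `A`; the vertices of `U` are those whose path has not been
modified yet at that end. -/
structure IsInsertionStage (E : Finset (Sym2 V)) (x : V) (U A : Finset V)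
    (D : Multiset (AnyWalk G)) : Prop where
  adj : ∀ v ∈ U, G.Adj x v
  subset : A ⊆ U
  isPathOrCycle : ∀ P ∈ D, IsPathOrCycle P
  edges_add : edges D + (star x A).val = E.val
  exists_isPath : ∀ v ∈ U, ∃ (w : V) (p : G.Walk v w),
    p.IsPath ∧ Traverses D p ∧ EntersFrom U x p

namespace IsInsertionStage

lemma mk_notMem_edges (h : IsInsertionStage E x U A D) (hy : y ∈ A) : s(x, y) ∉ edges D := by
  have hnodup := E.nodup
  rw [← h.edges_add, nodup_add] at hnodup
  exact fun hmem ↦ disjoint_left.1 hnodup.2.2 hmem (mk_mem_star.2 hy)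

lemma exists_cons (h : IsInsertionStage E x U A D) (hy : y ∈ U) :
    ∃ (w : V) (p : G.Walk y w) (D₀ : Multiset (AnyWalk G)), p.IsPath ∧ EntersFrom U x p ∧
      card D = card D₀ + 1 ∧ IsInsertionStage E x U A (⟨y, w, p⟩ ::ₘ D₀) := by
  obtain ⟨w, p, hp, hpD, hpU⟩ := h.exists_isPath y hy
  obtain ⟨D₀, hle, hcard, hedges, htrav⟩ := hpD.exists_reorient
  refine ⟨w, p, D₀, hp, hpU, hcard.trans (card_cons ..), h.adj, h.subset, fun P hP ↦ ?_,
    hedges ▸ h.edges_add, fun v hv ↦ ?_⟩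
  · rcases mem_cons.1 hP with rfl | hP
    · exact .inl hp
    · exact h.isPathOrCycle P (mem_of_le hle hP)
  · obtain ⟨w', t, ht, htD, htU⟩ := h.exists_isPath v hv
    exact ⟨w', t, ht, htrav htD, htU⟩

section

variable [DecidableEq V]

lemma replace {p : G.Walk y w} (h : IsInsertionStage E x U A (⟨y, w, p⟩ ::ₘ D₀)) (hy : y ∈ A)
    (hA' : A' ⊆ U.erase y) {N : AnyWalk G} (hN : IsPathOrCycle N)
    (hedges : N.2.2.edges + (star x A').val = p.edges + (star x A).val)
    (hend : w ∈ U → EntersFrom U x p.reverse → ∃ (w' : V) (t : G.Walk w w'),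
      t.IsPath ∧ Traverses {N} t ∧ EntersFrom (U.erase y) x t) :
    IsInsertionStage E x (U.erase y) A' (N ::ₘ D₀) where
  adj v hv := h.adj v (Finset.mem_of_mem_erase hv)
  subset := hA'
  isPathOrCycle P hP := by
    rcases mem_cons.1 hP with rfl | hP
    · exact hN
    · exact h.isPathOrCycle P (mem_cons_of_mem hP)
  edges_add := by
    rw [← h.edges_add, edges_cons, edges_cons, add_right_comm, hedges, add_right_comm]
  exists_isPath v hv := by
    obtain ⟨hvy, hvU⟩ := Finset.mem_erase.1 hv
    obtain ⟨v', t, ht, htD, htU⟩ := h.exists_isPath v hvU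
    rcases traverses_cons.1 htD with htD₀ | h_eq | h_eq
    · refine ⟨v', t, ht, traverses_cons.2 (.inl htD₀), htU.imp_right fun hU q r hqr ↦ ?_⟩
      refine Finset.mem_erase.2 ⟨?_, hU q r hqr⟩
      intro hpen
      have hq : ¬ q.Nil := fun hnil ↦ (h.adj v hvU).ne hnil.eq.symm
      have hxy : s(x, y) ∈ t.edges := by
        rw [hqr, edges_append, Sym2.eq_swap, ← hpen]
        exact List.mem_append_left _ (mk_penultimate_end_mem_edges hq)
      exact h.mk_notMem_edges hy (htD.mem_edges hxy)
    · cases h_eq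
      exact absurd rfl hvy
    · cases h_eq
      obtain ⟨w', t', ht', ht'N, ht'U⟩ := hend hvU (by rwa [reverse_reverse])
      exact ⟨w', t', ht', ht'N.imp (mem_of_le (by simp)) (mem_of_le (by simp)), ht'U⟩

lemma extend {p : G.Walk y w} (h : IsInsertionStage E x U A (⟨y, w, p⟩ ::ₘ D₀)) (hy : y ∈ A)
    (hp : p.IsPath) (hx : x ∉ p.support) :
    IsInsertionStage E x (U.erase y) (A.erase y)
      (⟨x, w, cons (h.adj y (h.subset hy)) p⟩ ::ₘ D₀) := by
  have hp' : (cons (h.adj y (h.subset hy)) p).IsPath := hp.cons hx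
  refine h.replace hy (Finset.erase_subset_erase _ h.subset) (.inl hp') ?_ fun _ _ ↦
    ⟨x, _, hp'.reverse, .inr (by simp), .inl rfl⟩
  rw [← cons_star_erase hy, add_cons, Walk.edges_cons, ← cons_coe, cons_add, Sym2.eq_swap]

lemma close {p : G.Walk y x} (h : IsInsertionStage E x U A (⟨y, x, p⟩ ::ₘ D₀)) (hy : y ∈ A)
    (hp : p.IsPath) :
    IsInsertionStage E x (U.erase y) (A.erase y)
      (⟨x, x, cons (h.adj y (h.subset hy)) p⟩ ::ₘ D₀) := by
  have hxy : s(x, y) ∉ p.edges := fun hmem ↦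
    h.mk_notMem_edges hy (mem_edges.2 ⟨_, mem_cons_self _ _, hmem⟩)
  refine h.replace hy (Finset.erase_subset_erase _ h.subset)
    (.inr ⟨rfl, (cons_isCycle_iff _ _).2 ⟨hp, hxy⟩⟩) ?_ fun hx ↦ absurd rfl (h.adj x hx).ne
  rw [← cons_star_erase hy, add_cons, Walk.edges_cons, ← cons_coe, cons_add, Sym2.eq_swap]

lemma rotate {q : G.Walk y z} {hzx : G.Adj z x} {r : G.Walk x w}
    (h : IsInsertionStage E x U A (⟨y, w, q.append (cons hzx r)⟩ ::ₘ D₀)) (hy : y ∈ A)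
    (hp : (q.append (cons hzx r)).IsPath) (hz : z ∈ U) :
    IsInsertionStage E x (U.erase y) (insert z (A.erase y))
      (⟨z, w, q.reverse.append (cons (h.adj y (h.subset hy)).symm r)⟩ ::ₘ D₀) := by
  have hyx := (h.adj y (h.subset hy)).symm
  have hzA : z ∉ A := fun hzA ↦ h.mk_notMem_edges hzA <|
    mem_edges.2 ⟨_, mem_cons_self _ _, by simp [Sym2.eq_swap]⟩
  have hzy : z ≠ y := fun hzy ↦ hzA (hzy ▸ hy)
  have hA' : insert z (A.erase y) ⊆ U.erase y :=
    Finset.insert_subset (Finset.mem_erase.2 ⟨hzy, hz⟩) (Finset.erase_subset_erase _ h.subset)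
  have hN : (q.reverse.append (cons hyx r)).IsPath := isPath_reverse_append_cons hp hyx
  refine h.replace hy hA' (.inl hN) ?_ fun _ hback ↦ ⟨z, _, hN.reverse, .inr (by simp), .inr ?_⟩
  · rw [← cons_star_erase hy, ← cons_star_erase (Finset.mem_insert_self z _),
      Finset.erase_insert (fun hmem ↦ hzA (Finset.mem_of_mem_erase hmem))]
    simp only [edges_append, edges_reverse, Walk.edges_cons, ← coe_add, ← cons_coe, coe_reverse,
      Sym2.eq_swap (a := x), add_cons, cons_add]
    rw [cons_swap]
  · intro q' r' hqr
    rw [reverse_append_cons, reverse_reverse] at hqr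
    have hq' : r.reverse = q' :=
      append_left_cancel_of_isPath (by
        simpa only [reverse_append_cons, reverse_reverse] using hN.reverse) hqr
    rw [← hq', Finset.mem_erase]
    refine ⟨fun hpen ↦ ?_, hback.resolve_left hyx.ne _ _ (reverse_append_cons ..)⟩
    have hyr : y ∈ r.support := by
      rw [← List.mem_reverse, ← support_reverse, ← hpen]
      exact r.reverse.getVert_mem_support _
    exact hp.ne_of_mem_support_of_append hzy.symm q.start_mem_support
      (List.mem_cons_of_mem _ hyr) rfl

lemma step (h : IsInsertionStage E x U A D) (hy : y ∈ A) :
    ∃ (A' : Finset V) (D' : Multiset (AnyWalk G)),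
      card D' = card D ∧ IsInsertionStage E x (U.erase y) A' D' := by
  obtain ⟨w, p, D₀, hp, hpU, hcard, hD⟩ := h.exists_cons (h.subset hy)
  rw [hcard]
  by_cases hx : x ∈ p.support
  · rcases eq_or_ne w x with rfl | hwx
    · exact ⟨_, _, card_cons .., hD.close hy hp⟩
    · obtain ⟨q, r, hqr⟩ := mem_support_iff_exists_append.1 hx
      have hq : ¬ q.Nil := fun hnil ↦ (h.adj y (h.subset hy)).ne hnil.eq.symm
      have hz : q.penultimate ∈ U := hpU.resolve_left hwx q r hqr
      rw [← concat_dropLast (adj_penultimate hq), concat_append] at hqr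
      subst hqr
      exact ⟨_, _, card_cons .., hD.rotate hy hp hz⟩
  · exact ⟨_, _, card_cons .., hD.extend hy hp hx⟩

end

lemma exists_isDecomposition (h : IsInsertionStage E x U A D) :
    ∃ D' : Multiset (AnyWalk G), card D' = card D ∧ IsDecomposition D' E := by
  classical
  induction hn : U.card using Nat.strong_induction_on generalizing U A D with
  | _ n ih =>
    obtain rfl | ⟨y, hy⟩ := A.eq_empty_or_nonempty
    · exact ⟨D, rfl, h.isPathOrCycle, by simpa [star] using h.edges_add⟩
    · obtain ⟨A', D', hcard, h'⟩ := h.step hy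
      obtain ⟨D'', hcard', hD''⟩ :=
        ih _ (hn ▸ Finset.card_erase_lt_of_mem (h.subset hy)) h' rfl
      exact ⟨D'', hcard'.trans hcard, hD''⟩

end IsInsertionStage

lemma IsDecomposition.exists_insert_star [DecidableEq V] (hD : IsDecomposition D (E \ star x A))
    (hA : star x A ⊆ E) (hadj : ∀ v, s(x, v) ∈ E → G.Adj x v)
    (hpath : ∀ v, s(x, v) ∈ E → ∃ (w : V) (p : G.Walk v w), p.IsPath ∧ Traverses D p) :
    ∃ D' : Multiset (AnyWalk G), card D' = card D ∧ IsDecomposition D' E := by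
  let U : Finset V := E.preimage (Sym2.mkEmbedding x) (Sym2.mkEmbedding x).injective.injOn
  have mem_U {v : V} : v ∈ U ↔ s(x, v) ∈ E := Finset.mem_preimage
  have edges_subset {e : Sym2 V} (he : e ∈ edges D) : e ∈ E :=
    (Finset.mem_sdiff.1 (hD.edges_eq ▸ he : e ∈ (E \ star x A).val)).1
  refine IsInsertionStage.exists_isDecomposition (x := x) (U := U) (A := A)
    ⟨fun v hv ↦ hadj v (mem_U.1 hv), fun v hv ↦ mem_U.2 (hA (mk_mem_star.2 hv)),
      hD.isPathOrCycle, ?_, fun v hv ↦ ?_⟩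
  · rw [hD.edges_eq, Finset.sdiff_val, Multiset.sub_add_cancel (Finset.val_le_iff.2 hA)]
  · obtain ⟨w, p, hp, hpD⟩ := hpath v (mem_U.1 hv)
    refine ⟨w, p, hp, hpD, .inr fun q r hqr ↦ mem_U.2 (edges_subset (hpD.mem_edges ?_))⟩
    have hq : ¬ q.Nil := fun hnil ↦ (hadj v (mem_U.1 hv)).ne hnil.eq.symm
    rw [hqr, edges_append, Sym2.eq_swap]
    exact List.mem_append_left _ (mk_penultimate_end_mem_edges hq)

end Star

section Degree

variable [DecidableEq V] {E S : Finset (Sym2 V)} {x v : V} {A : Finset V}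

/-- The degree of `v` in the graph with edge set `E`. -/
def degree (E : Finset (Sym2 V)) (v : V) : ℕ :=
  #{e ∈ E | v ∈ e}

/-- The vertices of positive degree in the graph with edge set `E`. -/
def vertices (E : Finset (Sym2 V)) : Finset V :=
  E.biUnion Sym2.toFinset

lemma mem_vertices : v ∈ vertices E ↔ ∃ e ∈ E, v ∈ e := by
  simp [vertices]

lemma degree_pos : 0 < degree E v ↔ v ∈ vertices E := by
  rw [degree, Finset.card_pos, Finset.filter_nonempty_iff, mem_vertices]

lemma vertices_mono (h : S ⊆ E) : vertices S ⊆ vertices E :=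
  Finset.biUnion_subset_biUnion_of_subset_left _ h

lemma vertices_insert {a b : V} :
    vertices (insert s(a, b) E) = insert a (insert b (vertices E)) := by
  rw [vertices, Finset.biUnion_insert, Sym2.toFinset_mk_eq, Finset.insert_union,
    Finset.singleton_union]
  rfl

lemma degree_sdiff_add (h : S ⊆ E) : degree (E \ S) v + degree S v = degree E v := by
  rw [degree, degree, degree, ← Finset.card_union_of_disjoint, ← Finset.filter_union,
    Finset.sdiff_union_of_subset h]
  exact Finset.disjoint_filter_filter Finset.sdiff_disjoint

lemma degree_star (hv : v ≠ x) : degree (star x A) v = if v ∈ A then 1 else 0 := by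
  have hfilter : {e ∈ star x A | v ∈ e} = star x {a ∈ A | v = a} := by
    ext e
    simp only [Finset.mem_filter, mem_star]
    constructor
    · rintro ⟨⟨a, ha, rfl⟩, hva⟩
      exact ⟨a, ⟨ha, (Sym2.mem_iff.1 hva).resolve_left hv⟩, rfl⟩
    · rintro ⟨a, ⟨ha, rfl⟩, rfl⟩
      exact ⟨⟨_, ha, rfl⟩, Sym2.mem_mk_right _ _⟩
  rw [degree, hfilter, star, Finset.card_map, Finset.filter_eq]
  split_ifs <;> simp

lemma degree_erase_add {e : Sym2 V} (he : e ∈ E) :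
    degree (E.erase e) v + (if v ∈ e then 1 else 0) = degree E v := by
  rw [← Finset.sdiff_singleton_eq_erase,
    ← degree_sdiff_add (S := {e}) (Finset.singleton_subset_iff.2 he)]
  congr 1
  rw [degree, Finset.filter_singleton]
  split_ifs <;> rfl

lemma sum_degree (hE : ∀ e ∈ E, ¬ e.IsDiag) : ∑ v ∈ vertices E, degree E v = 2 * #E := by
  have h := Finset.sum_card_bipartiteAbove_eq_sum_card_bipartiteBelow (s := vertices E) (t := E)
    (fun v e ↦ v ∈ e)
  calc ∑ v ∈ vertices E, degree E v = ∑ e ∈ E, #{v ∈ vertices E | v ∈ e} := h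
    _ = ∑ e ∈ E, 2 := Finset.sum_congr rfl fun e he ↦ by
      rw [← Sym2.card_toFinset_of_not_isDiag e (hE e he)]
      congr 1
      ext v
      simpa [mem_vertices] using fun hv ↦ ⟨e, he, hv⟩
    _ = 2 * #E := by rw [Finset.sum_const, smul_eq_mul, mul_comm]

lemma even_card_vertices (hE : ∀ e ∈ E, ¬ e.IsDiag) (hodd : ∀ v ∈ vertices E, Odd (degree E v)) :
    Even #(vertices E) := by
  have h_even : Even (∑ v ∈ vertices E, degree E v) := sum_degree hE ▸ even_two_mul _
  rwa [Finset.even_sum_iff_even_card_odd, Finset.filter_true_of_mem hodd] at h_even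

lemma IsDecomposition.exists_isPath_of_odd_degree {D : Multiset (AnyWalk G)}
    (hD : IsDecomposition D E) (hv : Odd (degree E v)) :
    ∃ w ≠ v, ∃ p : G.Walk v w, p.IsPath ∧ Traverses D p := by
  refine exists_isPath_of_odd_countP hD.isPathOrCycle ?_
  rwa [hD.edges_eq, countP_eq_card_filter]

lemma IsDecomposition.exists_of_insert_pendant {D : Multiset (AnyWalk G)} {q y : V}
    (hD : IsDecomposition D (insert s(q, y) E)) (hq : q ∉ vertices E) :
    ∃ D' : Multiset (AnyWalk G), card D' = card D ∧ IsDecomposition D' E ∧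
      ∃ (w : V) (p : G.Walk y w), p.IsPath ∧ Traverses D' p := by
  have mem_of_mem {e : Sym2 V} (he : e ∈ insert s(q, y) E) (hqe : q ∈ e) : e = s(q, y) :=
    (Finset.mem_insert.1 he).resolve_right fun heE ↦ hq (mem_vertices.2 ⟨e, heE, hqe⟩)
  have hqy : s(q, y) ∉ E := fun h ↦ hq (mem_vertices.2 ⟨_, h, Sym2.mem_mk_left _ _⟩)
  have hdeg : degree (insert s(q, y) E) q = 1 := by
    rw [← degree_erase_add (Finset.mem_insert_self s(q, y) E), Finset.erase_insert hqy,
      Nat.eq_zero_of_not_pos (degree_pos.not.2 hq), if_pos (Sym2.mem_mk_left _ _)]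
  obtain ⟨w, hwq, p, hp, hpD⟩ := hD.exists_isPath_of_odd_degree (hdeg ▸ odd_one)
  obtain ⟨D₀, hle, hcard, hedges, -⟩ := hpD.exists_reorient
  cases p with
  | nil => exact absurd rfl hwq
  | @cons _ b _ hqb p =>
    obtain rfl : b = y := by
      have hmem : s(q, b) ∈ (insert s(q, y) E).val := hD.edges_eq ▸ hpD.mem_edges (by simp)
      exact Sym2.congr_right.1 (mem_of_mem hmem (Sym2.mem_mk_left _ _))
    refine ⟨⟨b, w, p⟩ ::ₘ D₀, by rw [hcard, card_cons, card_cons], ⟨fun P hP ↦ ?_, ?_⟩,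
      w, p, hp.of_cons, .inl (mem_cons_self _ _)⟩
    · rcases mem_cons.1 hP with rfl | hP
      · exact .inl hp.of_cons
      · exact hD.isPathOrCycle P (mem_of_le hle hP)
    · rw [hD.edges_eq, Finset.insert_val_of_notMem hqy, edges_cons, Walk.edges_cons, ← cons_coe,
        cons_add, ← edges_cons ⟨b, w, p⟩, cons_inj_right] at hedges
      exact hedges.symm

end Degree

section Bound

variable [DecidableEq V] {E : Finset (Sym2 V)} {x y : V}

/-- Some decomposition of `E` into paths and cycles of the complete graph has at most half as many
members as `E` has vertices. -/
def HasLovaszDecomposition (E : Finset (Sym2 V)) : Prop :=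
  ∃ D : Multiset (AnyWalk (⊤ : SimpleGraph V)), 2 * card D ≤ #(vertices E) ∧ IsDecomposition D E

lemma hasLovaszDecomposition_of_even_degree (hE : ∀ e ∈ E, ¬ e.IsDiag)
    (ih : ∀ F ⊆ E, #F < #E → HasLovaszDecomposition F) (hxy : s(x, y) ∈ E)
    (hy : Even (degree E y)) : HasLovaszDecomposition E := by
  let A : Finset V := {v ∈ vertices E | s(x, v) ∈ E ∧ Even (degree E v)}
  have mem_A {v : V} : v ∈ A ↔ s(x, v) ∈ E ∧ Even (degree E v) := by
    simpa [A, mem_vertices] using fun h _ ↦ ⟨_, h, Sym2.mem_mk_right _ _⟩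
  have hA : star x A ⊆ E := fun e he ↦ by
    obtain ⟨a, ha, rfl⟩ := mem_star.1 he
    exact (mem_A.1 ha).1
  have hadj (v : V) (hv : s(x, v) ∈ E) : (⊤ : SimpleGraph V).Adj x v := by simpa using hE _ hv
  have hlt : #(E \ star x A) < #E := Finset.card_lt_card <|
    Finset.sdiff_ssubset hA ⟨_, mk_mem_star.2 (mem_A.2 ⟨hxy, hy⟩)⟩
  obtain ⟨D, hcard, hD⟩ := ih _ Finset.sdiff_subset hlt
  have hodd (v : V) (hv : s(x, v) ∈ E) : Odd (degree (E \ star x A) v) := by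
    have hdeg := degree_sdiff_add (v := v) hA
    rw [degree_star (hadj v hv).ne'] at hdeg
    by_cases h_even : Even (degree E v)
    · rw [if_pos (mem_A.2 ⟨hv, h_even⟩)] at hdeg
      exact Nat.not_even_iff_odd.1 fun h ↦ Nat.not_even_iff_odd.2 (hdeg ▸ h.add_one) h_even
    · rw [if_neg fun h ↦ h_even (mem_A.1 h).2] at hdeg
      rwa [← hdeg, add_zero, Nat.not_even_iff_odd] at h_even
  obtain ⟨D', hcard', hD'⟩ := hD.exists_insert_star hA hadj fun v hv ↦ by
    obtain ⟨w, -, p, hp⟩ := hD.exists_isPath_of_odd_degree (hodd v hv)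
    exact ⟨w, p, hp⟩
  exact ⟨D', hcard' ▸ hcard.trans (Finset.card_le_card (vertices_mono Finset.sdiff_subset)), hD'⟩

lemma hasLovaszDecomposition_of_degree_eq_one (hE : ∀ e ∈ E, ¬ e.IsDiag)
    (ih : HasLovaszDecomposition (E.erase s(x, y))) (hodd : ∀ v ∈ vertices E, Odd (degree E v))
    (hxy : s(x, y) ∈ E) (hx : degree E x = 1) : HasLovaszDecomposition E := by
  have hadj : (⊤ : SimpleGraph V).Adj x y := by simpa using hE _ hxy
  obtain ⟨D, hcard, hD⟩ := ih
  refine ⟨⟨x, y, hadj.toWalk⟩ ::ₘ D, ?_, fun P hP ↦ ?_, ?_⟩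
  · have hxF : x ∉ vertices (E.erase s(x, y)) := by
      have hdeg := degree_erase_add (v := x) hxy
      rw [if_pos (Sym2.mem_mk_left _ _), hx] at hdeg
      rw [← degree_pos]
      omega
    have hssub : vertices (E.erase s(x, y)) ⊂ vertices E :=
      (vertices_mono (Finset.erase_subset _ _)).ssubset_of_mem_notMem
        (mem_vertices.2 ⟨_, hxy, Sym2.mem_mk_left _ _⟩) hxF
    have hlt := Finset.card_lt_card hssub
    obtain ⟨k, hk⟩ := even_card_vertices hE hodd
    rw [card_cons]
    omega
  · rcases mem_cons.1 hP with rfl | hP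
    · exact .inl (.of_adj hadj)
    · exact hD.isPathOrCycle P hP
  · rw [edges_cons, hD.edges_eq, Finset.erase_val]
    exact Multiset.cons_erase hxy

lemma IsDecomposition.exists_replace_pendant {D : Multiset (AnyWalk (⊤ : SimpleGraph V))} {q : V}
    (hD : IsDecomposition D (insert s(q, y) (E.erase s(x, y)))) (hq : q ∉ vertices E)
    (hE : ∀ e ∈ E, ¬ e.IsDiag) (hodd : ∀ v ∈ vertices E, Odd (degree E v)) (hxy : s(x, y) ∈ E) :
    ∃ D' : Multiset (AnyWalk (⊤ : SimpleGraph V)), card D' = card D ∧ IsDecomposition D' E := by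
  have hadj (v : V) (hv : s(x, v) ∈ E) : (⊤ : SimpleGraph V).Adj x v := by simpa using hE _ hv
  have hstar : star x {y} = {s(x, y)} := Finset.map_singleton _ _
  obtain ⟨D', hcard', hD', w, p, hp⟩ :=
    hD.exists_of_insert_pendant fun h ↦ hq (vertices_mono (Finset.erase_subset _ _) h)
  have hpath (v : V) (hv : s(x, v) ∈ E) :
      ∃ (w : V) (p : (⊤ : SimpleGraph V).Walk v w), p.IsPath ∧ Traverses D' p := by
    obtain rfl | hvy := eq_or_ne v y
    · exact ⟨w, p, hp⟩
    · have hdeg := degree_erase_add (v := v) hxy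
      rw [if_neg (by simp [(hadj v hv).ne', hvy]), add_zero] at hdeg
      have hv_odd := hodd v (mem_vertices.2 ⟨_, hv, Sym2.mem_mk_right _ _⟩)
      obtain ⟨w, -, p, hp⟩ := hD'.exists_isPath_of_odd_degree (hdeg ▸ hv_odd)
      exact ⟨w, p, hp⟩
  rw [← Finset.sdiff_singleton_eq_erase, ← hstar] at hD'
  obtain ⟨D'', hcard'', hD''⟩ := hD'.exists_insert_star (by simpa [hstar] using hxy) hadj hpath
  exact ⟨D'', hcard''.trans hcard', hD''⟩

lemma hasLovaszDecomposition_of_odd_degree [Infinite V] (hE : ∀ e ∈ E, ¬ e.IsDiag)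
    (ih : ∀ F : Finset (Sym2 V), (∀ e ∈ F, ¬ e.IsDiag) → #F < #E → HasLovaszDecomposition F)
    (hodd : ∀ v ∈ vertices E, Odd (degree E v)) (hxy : s(x, y) ∈ E) (hx : degree E x ≠ 1) :
    HasLovaszDecomposition E := by
  obtain ⟨q, hq⟩ := Infinite.exists_notMem_finset (vertices E)
  have hxV : x ∈ vertices E := mem_vertices.2 ⟨_, hxy, Sym2.mem_mk_left _ _⟩
  have hyV : y ∈ vertices E := mem_vertices.2 ⟨_, hxy, Sym2.mem_mk_right _ _⟩
  have hqy : s(q, y) ∉ E.erase s(x, y) := fun h ↦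
    hq (mem_vertices.2 ⟨_, Finset.mem_of_mem_erase h, Sym2.mem_mk_left _ _⟩)
  set E₁ := insert s(q, y) (E.erase s(x, y)) with hE₁
  have hdeg : degree E₁ x + 1 = degree E x := by
    have hxqy : x ∉ s(q, y) := by
      simpa using ⟨ne_of_mem_of_not_mem hxV hq, by simpa using hE _ hxy⟩
    rw [← degree_erase_add hxy, if_pos (Sym2.mem_mk_left _ _),
      ← degree_erase_add (Finset.mem_insert_self s(q, y) _), Finset.erase_insert hqy, if_neg hxqy]
  have hcardE₁ : #E₁ = #E := by
    rw [hE₁, Finset.card_insert_of_notMem hqy, Finset.card_erase_add_one hxy]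
  have hE₁diag (e : Sym2 V) (he : e ∈ E₁) : ¬ e.IsDiag := by
    obtain rfl | he := Finset.mem_insert.1 he
    · simpa using (ne_of_mem_of_not_mem hyV hq).symm
    · exact hE e (Finset.mem_of_mem_erase he)
  obtain ⟨u, hux⟩ : ∃ u, s(u, x) ∈ E₁ := by
    obtain ⟨e, he, u, rfl⟩ := mem_vertices.1 (degree_pos.1 (by omega : 0 < degree E₁ x))
    exact ⟨u, Sym2.eq_swap ▸ he⟩
  have hx_even : Even (degree E₁ x) := by
    have hx_odd := hodd x hxV
    rwa [← hdeg, Nat.odd_add_one, Nat.not_odd_iff_even] at hx_odd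
  obtain ⟨D, hcard, hD⟩ := hasLovaszDecomposition_of_even_degree hE₁diag
    (fun F hF hlt ↦ ih F (fun e he ↦ hE₁diag e (hF he)) (hcardE₁ ▸ hlt)) hux hx_even
  obtain ⟨D', hcard', hD'⟩ := hD.exists_replace_pendant hq hE hodd hxy
  refine ⟨D', ?_, hD'⟩
  have hverts : vertices E₁ ⊆ insert q (vertices E) := by
    rw [hE₁, vertices_insert]
    exact Finset.insert_subset_insert _ <|
      Finset.insert_subset hyV (vertices_mono (Finset.erase_subset _ _))
  have hle := (Finset.card_le_card hverts).trans (Finset.card_insert_le _ _)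
  obtain ⟨k, hk⟩ := even_card_vertices hE hodd
  omega

theorem hasLovaszDecomposition [Infinite V] (hE : ∀ e ∈ E, ¬ e.IsDiag) :
    HasLovaszDecomposition E := by
  induction hn : #E using Nat.strong_induction_on generalizing E with
  | _ n ih =>
    subst hn
    replace ih (F : Finset (Sym2 V)) (hF : ∀ e ∈ F, ¬ e.IsDiag) (hlt : #F < #E) :=
      ih _ hlt hF rfl
    have ih_subset (F : Finset (Sym2 V)) (hFE : F ⊆ E) (hlt : #F < #E) :=
      ih F (fun e he ↦ hE e (hFE he)) hlt
    by_cases h_even : ∃ x y, s(x, y) ∈ E ∧ Even (degree E y)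
    · obtain ⟨x, y, hxy, hy⟩ := h_even
      exact hasLovaszDecomposition_of_even_degree hE ih_subset hxy hy
    have hodd (v : V) (hv : v ∈ vertices E) : Odd (degree E v) := by
      obtain ⟨e, he, u, rfl⟩ := mem_vertices.1 hv
      exact Nat.not_even_iff_odd.1 fun h ↦ h_even ⟨u, v, Sym2.eq_swap ▸ he, h⟩
    obtain rfl | ⟨⟨x, y⟩, hxy⟩ := E.eq_empty_or_nonempty
    · exact ⟨0, by simp, by simp, rfl⟩
    by_cases hx : degree E x = 1
    · exact hasLovaszDecomposition_of_degree_eq_one hE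
        (ih_subset _ (Finset.erase_subset _ _) (Finset.card_erase_lt_of_mem hxy)) hodd hxy hx
    · exact hasLovaszDecomposition_of_odd_degree hE ih hodd hxy hx

end Bound

section Pullback

/-- The image of a walk under a graph homomorphism. -/
def AnyWalk.map (f : G →g H) (P : AnyWalk G) : AnyWalk H :=
  ⟨f P.1, f P.2.1, P.2.2.map f⟩

lemma isPath_map_of_injOn {f : G →g H} {u v : V} {p : G.Walk u v} (hp : p.IsPath)
    (hf : Set.InjOn f {x | x ∈ p.support}) : (p.map f).IsPath := by
  rw [isPath_def, Walk.support_map]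
  exact hp.support_nodup.map_on fun _ hx _ hy h ↦ hf hx hy h

lemma isCycle_map_of_injOn {f : G →g H} {u : V} {p : G.Walk u u} (hp : p.IsCycle)
    (hf : Set.InjOn f {x | x ∈ p.support}) : (p.map f).IsCycle := by
  rw [isCycle_iff_isPath_tail_and_le_length] at hp ⊢
  cases p with
  | nil => simp_all
  | cons h p =>
    simp only [Walk.map_cons, getVert_cons_succ, tail_cons, isPath_copy, length_cons,
      length_map] at hp ⊢
    exact ⟨isPath_map_of_injOn hp.1 (hf.mono fun _ ↦ List.mem_cons_of_mem _), hp.2⟩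

lemma IsPathOrCycle.map {P : AnyWalk G} (hP : IsPathOrCycle P) {f : G →g H}
    (hf : Set.InjOn f G.support) : IsPathOrCycle (P.map f) := by
  obtain ⟨u, v, p⟩ := P
  by_cases hnil : p.Nil
  · obtain rfl := hnil.eq
    exact .inl (isPath_iff_nil.2 ((nil_map_iff f).2 hnil))
  have hf' : Set.InjOn f {x | x ∈ p.support} :=
    hf.mono fun x hx ↦ mem_support_of_mem_walk_support p hnil hx
  rcases hP with hp | ⟨h, hp⟩
  · exact .inl (isPath_map_of_injOn hp hf')
  · obtain rfl : v = u := h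
    exact .inr ⟨rfl, isCycle_map_of_injOn hp hf'⟩

lemma IsPathOrCycle.transfer {P : AnyWalk G} (hP : IsPathOrCycle P) {K : SimpleGraph V}
    (hK : ∀ e ∈ P.2.2.edges, e ∈ K.edgeSet) :
    IsPathOrCycle ⟨P.1, P.2.1, P.2.2.transfer K hK⟩ := by
  obtain ⟨u, v, p⟩ := P
  rcases hP with hp | ⟨h, hp⟩
  · exact .inl (hp.transfer hK)
  · obtain rfl : v = u := h
    exact .inr ⟨rfl, hp.transfer hK⟩

lemma IsDecomposition.comap {D : Multiset (AnyWalk H)} {E : Finset (Sym2 V)} {f : V ↪ W} {g : W → V}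
    (hD : IsDecomposition D (E.map f.sym2Map)) (hg : Function.LeftInverse g f)
    (hE : ∀ e ∈ E, e ∈ G.edgeSet) :
    ∃ D' : Multiset (AnyWalk G), card D' = card D ∧ IsDecomposition D' E := by
  let g' : G.map f →g G := ⟨g, fun {_ _} h ↦ by
    obtain ⟨a, b, hab, rfl, rfl⟩ := (map_adj ..).1 h
    rwa [hg, hg]⟩
  have hg' : Set.InjOn g' (G.map f).support := by
    rw [SimpleGraph.support_map]
    exact hg.rightInvOn_range.injOn.mono (Set.image_subset_range ..)
  have hedges (P : AnyWalk H) (hP : P ∈ D) : ∀ e ∈ P.2.2.edges, e ∈ (G.map f).edgeSet := by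
    intro e he
    have hmem : e ∈ (E.map f.sym2Map).val := hD.edges_eq ▸ mem_edges.2 ⟨P, hP, he⟩
    obtain ⟨e, heE, rfl⟩ := Finset.mem_map.1 hmem
    rw [SimpleGraph.edgeSet_map]
    exact ⟨e, hE e heE, rfl⟩
  have hlift (P : AnyWalk H) : ∃ Q : AnyWalk G, P ∈ D →
      IsPathOrCycle Q ∧ Q.2.2.edges = P.2.2.edges.map (Sym2.map g) := by
    by_cases hP : P ∈ D
    · exact ⟨_, fun _ ↦ ⟨((hD.isPathOrCycle P hP).transfer (hedges P hP)).map hg', by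
        simp [AnyWalk.map, g']⟩⟩
    · exact ⟨⟨_, _, .nil (u := g P.1)⟩, fun h ↦ absurd h hP⟩
  choose Q hQ using hlift
  refine ⟨D.map Q, card_map .., fun _ hmem ↦ ?_, ?_⟩
  · obtain ⟨P, hP, rfl⟩ := mem_map.1 hmem
    exact (hQ P hP).1
  · calc edges (D.map Q) = (edges D).map (Sym2.map g) := by
          rw [edges, Multiset.bind_map, edges, Multiset.map_bind]
          exact bind_congr fun P hP ↦ by rw [(hQ P hP).2, map_coe]
      _ = E.val.map (Sym2.map (g ∘ f)) := by
          rw [hD.edges_eq, Finset.map_val, Multiset.map_map, Sym2.map_comp]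
          rfl
      _ = E.val := by rw [hg.comp_eq_id, Sym2.map_id, Multiset.map_id]

lemma vertices_map [DecidableEq V] [DecidableEq W] {E : Finset (Sym2 V)} {f : V ↪ W} :
    vertices (E.map f.sym2Map) = (vertices E).map f := by
  ext w
  constructor
  · intro hw
    obtain ⟨_, he, hwe⟩ := mem_vertices.1 hw
    obtain ⟨e, heE, rfl⟩ := Finset.mem_map.1 he
    obtain ⟨v, hv, rfl⟩ := Sym2.mem_map.1 hwe
    exact Finset.mem_map_of_mem f (mem_vertices.2 ⟨e, heE, hv⟩)
  · intro hw
    obtain ⟨v, hv, rfl⟩ := Finset.mem_map.1 hw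
    obtain ⟨e, heE, hve⟩ := mem_vertices.1 hv
    exact mem_vertices.2 ⟨_, Finset.mem_map_of_mem _ heE, Sym2.mem_map.2 ⟨v, hve, rfl⟩⟩

lemma finite_edgeSet_of_finite_support (hG : G.support.Finite) : G.edgeSet.Finite := by
  refine hG.toFinset.sym2.finite_toSet.subset fun e he ↦ Finset.mem_sym2_iff.2 fun v hv ↦ ?_
  obtain ⟨w, rfl⟩ := hv
  exact hG.mem_toFinset.2 ⟨w, he⟩

lemma coe_vertices [DecidableEq V] {E : Finset (Sym2 V)} (hE : ∀ e, e ∈ E ↔ e ∈ G.edgeSet) :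
    (vertices E : Set V) = G.support := by
  ext v
  rw [Finset.mem_coe, mem_vertices, mem_support]
  constructor
  · rintro ⟨e, he, w, rfl⟩
    exact ⟨w, (hE _).1 he⟩
  · rintro ⟨w, hvw⟩
    exact ⟨s(v, w), (hE _).2 hvw, Sym2.mem_mk_left _ _⟩

theorem exists_isDecomposition [DecidableEq V] {E : Finset (Sym2 V)} (hE : ∀ e ∈ E, e ∈ G.edgeSet) :
    ∃ D : Multiset (AnyWalk G), 2 * card D ≤ #(vertices E) ∧ IsDecomposition D E := by
  obtain rfl | ⟨⟨v₀, _⟩, _⟩ := E.eq_empty_or_nonempty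
  · exact ⟨0, by simp, by simp, rfl⟩
  let f : V ↪ V ⊕ ℕ := .inl
  have hloopless : ∀ e ∈ E.map f.sym2Map, ¬ e.IsDiag := by
    rintro _ he
    obtain ⟨e, heE, rfl⟩ := Finset.mem_map.1 he
    exact (Sym2.isDiag_map f.injective).not.2 (G.not_isDiag_of_mem_edgeSet (hE e heE))
  obtain ⟨D, hcard, hD⟩ := hasLovaszDecomposition hloopless
  obtain ⟨D', hcard', hD'⟩ := hD.comap (g := Sum.elim id fun _ ↦ v₀) (fun _ ↦ rfl) hE
  rw [vertices_map, Finset.card_map] at hcard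
  exact ⟨D', hcard'.symm ▸ hcard, hD'⟩

end Pullback

end LovaszDecomposition

open LovaszDecomposition in
theorem stmt_8_general {V : Type*} (G : SimpleGraph V) (hG : G.support.Finite) :
    ∃ L : List (Σ (u : V) (v : V), G.Walk u v),
      L.length ≤ G.support.ncard / 2 ∧
      (∀ p ∈ L, p.2.2.IsPath ∨ ∃ h : p.2.1 = p.1, (p.2.2.copy rfl h).IsCycle) ∧
      List.Pairwise (fun p q => ∀ e ∈ p.2.2.edges, e ∉ q.2.2.edges) L ∧
      (∀ e : Sym2 V, e ∈ G.edgeSet ↔ ∃ p ∈ L, e ∈ p.2.2.edges) := by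
  classical
  obtain ⟨E, hE⟩ := (finite_edgeSet_of_finite_support hG).exists_finset
  obtain ⟨D, hcard, hD⟩ := exists_isDecomposition fun e ↦ (hE e).1
  obtain ⟨L, rfl⟩ := Quot.exists_rep D
  have hedges : ((L.flatMap fun P ↦ P.2.2.edges : List (Sym2 V)) : Multiset (Sym2 V)) = E.val :=
    (Multiset.coe_bind L _).symm.trans hD.edges_eq
  have hnodup : (L.flatMap fun P ↦ P.2.2.edges).Nodup :=
    Multiset.coe_nodup.1 (hedges ▸ E.nodup)
  refine ⟨L, ?_, hD.isPathOrCycle, (List.nodup_flatMap.1 hnodup).2.imp fun h e ↦ @h e,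
    fun e ↦ ?_⟩
  · rw [← coe_vertices hE, Set.ncard_coe_finset, Nat.le_div_iff_mul_le two_pos, mul_comm]
    exact hcard
  · rw [← hE e, ← Finset.mem_val, ← hedges, Multiset.mem_coe, List.mem_flatMap]

/-- Lovász: every simple graph on n vertices can be decomposed
into at most ⌊n/2⌋ edge-disjoint paths and cycles whose edge sets partition the
edge set of the graph. -/
theorem stmt_8 (n : ℕ) (G : SimpleGraph (Fin n)) :
    ∃ L : List (Σ (u : Fin n) (v : Fin n), G.Walk u v),
      L.length ≤ n / 2 ∧
      (∀ p ∈ L, p.2.2.IsPath ∨ ∃ h : p.2.1 = p.1, (p.2.2.copy rfl h).IsCycle) ∧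
      List.Pairwise (fun p q => ∀ e ∈ p.2.2.edges, e ∉ q.2.2.edges) L ∧
      (∀ e : Sym2 (Fin n), e ∈ G.edgeSet ↔ ∃ p ∈ L, e ∈ p.2.2.edges) := by
  obtain ⟨L, hlength, hL⟩ := stmt_8_general G G.support.toFinite
  have hcard : G.support.ncard ≤ n := by simpa using Set.ncard_le_card G.support
  exact ⟨L, hlength.trans (Nat.div_le_div_right hcard), hL⟩
end

section
/- If a simple graph G has u vertices of odd degree and g ≥ 1 vertices of even degree, then the edge set of G can be partitioned into at most u/2 + g − 1 paths. -/
/-!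
Prescribe, for every vertex `v`, how many path ends fall on `v`: a number `d v` of the same parity
as the degree of `v`, zero for at most one vertex that is not isolated. Such a decomposition is
built by induction on the edges. Remove an edge `ab`, chosen so that `d` is nonzero at all
non-isolated vertices other than `b`, and let one of the ends at `a` fall on `b` instead. Then
every neighbour of `a` is an end of some path; choose one for each.

To put `ab` back, look at the path chosen for `b`. If it avoids `a`, extend it by `ba`. Otherwise it
reads `b … w a …`; replace it by `w … b a …`, which uses `ba` but sets `wa` free, and continue with
the path chosen for `w`. An edge `wa` lies on only one path, and only one end of that path enters
`a` through it, so no neighbour of `a` occurs twice and the process stops.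

With `d` equal to 1 at odd vertices, 0 at one even vertex and 2 at the others, counting ends gives
the bound.
-/

namespace PathDecomposition

open Finset

section VertexLists

variable {V : Type*} {l : List V} {a b v w : V}

/-- The edges traversed by a list of vertices read as a walk; for the support of a
`SimpleGraph.Walk` they are `SimpleGraph.Walk.edges`. -/
def pathEdges (l : List V) : Multiset (Sym2 V) := List.zipWith (s(·, ·)) l l.tail

/-- The two ends of a list of vertices read as a walk. A single vertex is counted twice, so that
every nonempty list has exactly two ends. -/
def pathEnds (l : List V) : Multiset V := ↑(l.head?.toList ++ l.getLast?.toList)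

@[simp]
theorem pathEdges_singleton (v : V) : pathEdges [v] = 0 := rfl

@[simp]
theorem pathEdges_cons_cons (x y : V) (l : List V) :
    pathEdges (x :: y :: l) = s(x, y) ::ₘ pathEdges (y :: l) := rfl

theorem pathEdges_append_cons {X : List V} (hX : X.getLast? = some w) (a : V) (Y : List V) :
    pathEdges (X ++ a :: Y) = pathEdges X + s(w, a) ::ₘ pathEdges (a :: Y) := by
  induction X with
  | nil => simp at hX
  | cons x X ih =>
    cases X with
    | nil =>
      obtain rfl : x = w := by simpa using hX
      simp
    | cons y X =>
      rw [List.cons_append] at ih ⊢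
      rw [List.cons_append, pathEdges_cons_cons, pathEdges_cons_cons, ih (by simpa using hX),
        Multiset.cons_add]

theorem pathEdges_reverse (l : List V) : pathEdges l.reverse = pathEdges l := by
  induction l with
  | nil => rfl
  | cons x l ih =>
    cases l with
    | nil => rfl
    | cons y l =>
      rw [List.reverse_cons, pathEdges_append_cons (w := y) (by simp), ih]
      simp [Sym2.eq_swap, add_comm, ← Multiset.singleton_add]

theorem mem_pathEnds : v ∈ pathEnds l ↔ l.head? = some v ∨ l.getLast? = some v := by
  simp [pathEnds]

theorem pathEnds_reverse (l : List V) : pathEnds l.reverse = pathEnds l := by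
  simp [pathEnds, List.perm_append_comm]

theorem pathEnds_cons (x : V) (l : List V) :
    pathEnds (x :: l) = {x} + {(x :: l).getLast (by simp)} := by
  simp only [pathEnds, List.head?_cons, List.getLast?_eq_some_getLast (List.cons_ne_nil x l),
    Option.toList_some]
  rfl

theorem pathEnds_append_cons {X : List V} (hX : X.head? = some v) (a : V) (Y : List V) :
    pathEnds (X ++ a :: Y) = {v} + {(a :: Y).getLast (by simp)} := by
  simp only [pathEnds, List.head?_append, hX, Option.some_or, List.getLast?_append_cons,
    List.getLast?_eq_some_getLast (List.cons_ne_nil a Y), Option.toList_some]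
  rfl

theorem card_pathEnds (hl : l ≠ []) : (pathEnds l).card = 2 := by
  simp [pathEnds, List.head?_eq_some_head hl, List.getLast?_eq_some_getLast hl]

/-- The path `l`, followed from its end `v`, enters the vertex `a` immediately from `w`. The two
alternatives are the two directions in which `l` can be followed. -/
def EntersVia (l : List V) (v w a : V) : Prop :=
  ∃ X Y, l = X ++ a :: Y ∧
    (X.head? = some v ∧ X.getLast? = some w ∨ Y.getLast? = some v ∧ Y.head? = some w)

theorem EntersVia.reverse (h : EntersVia l v w a) : EntersVia l.reverse v w a := by
  obtain ⟨X, Y, rfl, h⟩ := h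
  exact ⟨Y.reverse, X.reverse, by simp, by simpa using h.symm⟩

theorem EntersVia.mem_pathEdges (h : EntersVia l v w a) : s(w, a) ∈ pathEdges l := by
  wlog hdir : ∃ X Y, l = X ++ a :: Y ∧ X.getLast? = some w generalizing l
  · obtain ⟨X, Y, rfl, hX | hY⟩ := id h
    · exact absurd ⟨X, Y, rfl, hX.2⟩ hdir
    · rw [← pathEdges_reverse]
      exact this h.reverse ⟨Y.reverse, X.reverse, by simp, by simpa using hY.2⟩
  obtain ⟨X, Y, rfl, hX⟩ := hdir
  simp [pathEdges_append_cons hX]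

theorem entersVia_append_cons_iff {X Y : List V} (hl : (X ++ a :: Y).Nodup) :
    EntersVia (X ++ a :: Y) v w a ↔
      X.head? = some v ∧ X.getLast? = some w ∨ Y.getLast? = some v ∧ Y.head? = some w := by
  refine ⟨fun ⟨X', Y', hXY, h⟩ => ?_, fun h => ⟨X, Y, rfl, h⟩⟩
  have haX : a ∉ X := fun h => List.disjoint_of_nodup_append hl h List.mem_cons_self
  have haY : a ∉ Y := (List.nodup_cons.1 (List.nodup_append.1 hl).2.1).1
  obtain ⟨rfl, -, rfl⟩ := (List.append_cons_inj_of_notMem haX haY).1 hXY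
  exact h

theorem EntersVia.end_unique (hl : l.Nodup) {v' : V} (h : EntersVia l v w a)
    (h' : EntersVia l v' w a) : v = v' := by
  obtain ⟨X, Y, rfl, h⟩ := h
  rw [entersVia_append_cons_iff hl] at h'
  have hXY : ∀ x ∈ X, x ∉ Y := fun x hx hy =>
    List.disjoint_of_nodup_append hl hx (List.mem_cons_of_mem a hy)
  rcases h with ⟨hv, hw⟩ | ⟨hv, hw⟩ <;> rcases h' with ⟨hv', hw'⟩ | ⟨hv', hw'⟩
  · exact Option.some_inj.1 (hv.symm.trans hv')
  · exact absurd (List.mem_of_mem_head? hw') (hXY w (List.mem_of_mem_getLast? hw))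
  · exact absurd (List.mem_of_mem_head? hw) (hXY w (List.mem_of_mem_getLast? hw'))
  · exact Option.some_inj.1 (hv.symm.trans hv')

theorem exists_entersVia (hb : b ∈ pathEnds l) (ha : a ∈ l) (hab : a ≠ b) :
    ∃ w, EntersVia l b w a := by
  wlog hhead : l.head? = some b generalizing l
  · have hlast : l.reverse.head? = some b := by
      simpa using (mem_pathEnds.1 hb).resolve_left hhead
    obtain ⟨w, hw⟩ := this (by rwa [pathEnds_reverse]) (List.mem_reverse.2 ha) hlast
    exact ⟨w, by simpa using hw.reverse⟩
  obtain ⟨X, Y, rfl⟩ := List.append_of_mem ha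
  cases X with
  | nil => exact absurd (by simpa using hhead) hab
  | cons x X =>
    exact ⟨(x :: X).getLast (by simp), x :: X, Y, rfl,
      .inl ⟨by simpa using hhead, List.getLast?_eq_some_getLast _⟩⟩

/-- A list of vertices describing a path: it is nonempty and repeats no vertex. Adjacency of
consecutive vertices is recorded separately, through `pathEdges`. -/
def IsVertexPath (l : List V) : Prop := l ≠ [] ∧ l.Nodup

theorem IsVertexPath.perm {l' : List V} (h : IsVertexPath l) (hl : l'.Perm l) : IsVertexPath l' :=
  ⟨fun h0 => h.1 (by simpa [h0] using hl.symm), hl.nodup_iff.2 h.2⟩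

/-- The path `l'` arises from the path `l`, which runs from its end `b` to `a` through the edge
`wa`, by exchanging the edge `wa` for the edge `ba`: `b … w a …` becomes `w … b a …`. The last field
says that the ends of `l` other than `b` still enter `a` as they did before. -/
structure IsRotation (a b w : V) (l l' : List V) : Prop where
  isVertexPath : IsVertexPath l'
  pathEdges_add : pathEdges l' + {s(w, a)} = pathEdges l + {s(b, a)}
  pathEnds_add : pathEnds l' + {b} = pathEnds l + {w}
  entersVia_of_ne : ∀ v ∈ pathEnds l, v ≠ b → ∀ z, EntersVia l' v z a → EntersVia l v z a

theorem isRotation_reverse_append {X Y : List V} (hl : IsVertexPath (X ++ a :: Y))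
    (hb : X.head? = some b) (hw : X.getLast? = some w) :
    IsRotation a b w (X ++ a :: Y) (X.reverse ++ a :: Y) where
  isVertexPath := hl.perm (X.reverse_perm.append_right _)
  pathEdges_add := by
    rw [pathEdges_append_cons (w := b) (by simpa), pathEdges_append_cons hw, pathEdges_reverse]
    simp only [← Multiset.singleton_add]
    abel
  pathEnds_add := by
    rw [pathEnds_append_cons (v := w) (by simpa), pathEnds_append_cons hb]
    abel
  entersVia_of_ne v hv hvb z hz := by
    rw [entersVia_append_cons_iff (hl.perm (X.reverse_perm.append_right _)).2] at hz
    refine ⟨X, Y, rfl, .inr (hz.resolve_left fun ⟨hvX, _⟩ => ?_)⟩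
    have hvX : v ∈ X := List.mem_of_mem_getLast? (by simpa using hvX)
    rcases mem_pathEnds.1 hv with hv | hv
    · exact hvb (by simpa [hb, eq_comm] using hv)
    · rw [List.getLast?_append_cons] at hv
      exact List.disjoint_of_nodup_append hl.2 hvX (List.mem_of_mem_getLast? hv)

theorem IsRotation.of_reverse {l' : List V} (h : IsRotation a b w l.reverse l') :
    IsRotation a b w l l' where
  isVertexPath := h.isVertexPath
  pathEdges_add := by rw [h.pathEdges_add, pathEdges_reverse]
  pathEnds_add := by rw [h.pathEnds_add, pathEnds_reverse]
  entersVia_of_ne v hv hvb z hz := by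
    simpa using (h.entersVia_of_ne v (by rwa [pathEnds_reverse]) hvb z hz).reverse

theorem exists_isRotation (hl : IsVertexPath l) (h : EntersVia l b w a) :
    ∃ l', IsRotation a b w l l' := by
  obtain ⟨X, Y, rfl, ⟨hb, hw⟩ | ⟨hb, hw⟩⟩ := h
  · exact ⟨_, isRotation_reverse_append hl hb hw⟩
  · have hrev : (X ++ a :: Y).reverse = Y.reverse ++ a :: X.reverse := by simp
    refine ⟨Y.reverse.reverse ++ a :: X.reverse, .of_reverse ?_⟩
    rw [hrev]
    exact isRotation_reverse_append (hrev ▸ hl.perm (List.reverse_perm _)) (by simpa) (by simpa)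

theorem IsRotation.mem_pathEnds {l' : List V} (h : IsRotation a b w l l') (hv : v ∈ pathEnds l)
    (hvb : v ≠ b) : v ∈ pathEnds l' := by
  have : v ∈ pathEnds l' + {b} := h.pathEnds_add ▸ Multiset.mem_add.2 (.inl hv)
  simpa [hvb] using this

theorem exists_extension (hl : IsVertexPath l) (hb : b ∈ pathEnds l) (ha : a ∉ l) :
    ∃ l', IsVertexPath l' ∧ pathEdges l' = pathEdges l + {s(b, a)} ∧
      pathEnds l' + {b} = pathEnds l + {a} := by
  wlog hhead : l.head? = some b generalizing l
  · have hlast : l.reverse.head? = some b := by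
      simpa using (mem_pathEnds.1 hb).resolve_left hhead
    simpa only [pathEdges_reverse, pathEnds_reverse] using
      this (hl.perm l.reverse_perm) (by rwa [pathEnds_reverse]) (by simpa) hlast
  obtain ⟨l, rfl⟩ : ∃ t, l = b :: t := by simpa [List.head?_eq_some_iff] using hhead
  refine ⟨a :: b :: l, ⟨by simp, List.nodup_cons.2 ⟨ha, hl.2⟩⟩, ?_, ?_⟩
  · rw [pathEdges_cons_cons, Sym2.eq_swap, ← Multiset.singleton_add, add_comm]
  · rw [pathEnds_cons, pathEnds_cons, List.getLast_cons (by simp)]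
    abel

end VertexLists

section PathFamilies

variable {V ι : Type*} [Fintype ι] {a b w : V}

theorem sum_update_add_eq [DecidableEq ι] {α M : Type*} [AddCommMonoid M] (P : ι → α) (f : α → M)
    {i : ι} {p : α} {x y : M} (h : f p + x = f (P i) + y) :
    ∑ j, f (Function.update P i p j) + x = ∑ j, f (P j) + y := by
  have hcompl : ∑ j ∈ {i}ᶜ, f (Function.update P i p j) = ∑ j ∈ {i}ᶜ, f (P j) :=
    sum_congr rfl fun j hj => by rw [Function.update_of_ne (by simpa using hj)]
  rw [Fintype.sum_eq_add_sum_compl i, Fintype.sum_eq_add_sum_compl i, Function.update_self, hcompl,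
    add_right_comm, h, add_right_comm]

theorem eq_of_mem_pathEdges {P : ι → List V} (hP : (∑ i, pathEdges (P i)).Nodup) {i j : ι}
    {e : Sym2 V} (hi : e ∈ pathEdges (P i)) (hj : e ∈ pathEdges (P j)) : i = j := by
  classical
  by_contra hij
  have hle : pathEdges (P i) + pathEdges (P j) ≤ ∑ k, pathEdges (P k) := by
    rw [← sum_pair (f := fun k => pathEdges (P k)) hij]
    exact sum_le_sum_of_subset (subset_univ _)
  exact Multiset.disjoint_left.1
    (Multiset.disjoint_of_nodup_add (Multiset.nodup_of_le hle hP)) hi hj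

/-- The situation while the edge `ba` is being added to the path family `P`. The vertices in `S` are
those whose chosen path `P (e v)`, of which they are an end, has not been rotated yet; entering `a`
from such an end leads to another vertex of `S`, and never to `b`. -/
structure RotationState (a : V) (e : V → ι) (S : Finset V) (b : V) (P : ι → List V) : Prop where
  isVertexPath : ∀ i, IsVertexPath (P i)
  nodup_edges : (∑ i, pathEdges (P i) + {s(b, a)}).Nodup
  mem : b ∈ S
  notMem : a ∉ S
  mem_pathEnds : ∀ v ∈ S, v ∈ pathEnds (P (e v))
  mem_of_entersVia : ∀ v ∈ S, ∀ w, EntersVia (P (e v)) v w a → w ∈ S ∧ w ≠ b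

variable {e : V → ι} {S : Finset V} {P : ι → List V}

theorem RotationState.eq_of_entersVia (h : RotationState a e S b P) {v v' : V}
    (hv : EntersVia (P (e v)) v w a) (hv' : EntersVia (P (e v')) v' w a) : v = v' := by
  have he : e v = e v' := eq_of_mem_pathEdges (Multiset.nodup_add.1 h.nodup_edges).1
    hv.mem_pathEdges hv'.mem_pathEdges
  exact hv.end_unique (h.isVertexPath _).2 (he ▸ hv')

theorem RotationState.rotate [DecidableEq V] [DecidableEq ι] (h : RotationState a e S b P)
    (hw : EntersVia (P (e b)) b w a) {l : List V} (hl : IsRotation a b w (P (e b)) l) :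
    RotationState a e (S.erase b) w (Function.update P (e b) l) where
  isVertexPath i := by
    obtain rfl | hi := eq_or_ne i (e b)
    · simpa using hl.isVertexPath
    · simpa [hi] using h.isVertexPath i
  nodup_edges := by
    rw [sum_update_add_eq P pathEdges hl.pathEdges_add]
    exact h.nodup_edges
  mem := mem_erase.2 (h.mem_of_entersVia b h.mem w hw).symm
  notMem := fun ha => h.notMem (mem_of_mem_erase ha)
  mem_pathEnds v hv := by
    obtain ⟨hvb, hvS⟩ := mem_erase.1 hv
    obtain he | he := eq_or_ne (e v) (e b)
    · simpa [he] using hl.mem_pathEnds (he ▸ h.mem_pathEnds v hvS) hvb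
    · simpa [he] using h.mem_pathEnds v hvS
  mem_of_entersVia v hv z hz := by
    obtain ⟨hvb, hvS⟩ := mem_erase.1 hv
    have hz : EntersVia (P (e v)) v z a := by
      obtain he | he := eq_or_ne (e v) (e b)
      · rw [he, Function.update_self] at hz
        rw [he]
        exact hl.entersVia_of_ne v (he ▸ h.mem_pathEnds v hvS) hvb z hz
      · rwa [Function.update_of_ne he] at hz
    obtain ⟨hzS, hzb⟩ := h.mem_of_entersVia v hvS z hz
    refine ⟨mem_erase.2 ⟨hzb, hzS⟩, ?_⟩
    rintro rfl
    exact hvb (h.eq_of_entersVia hz hw)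

theorem RotationState.exists_insert (h : RotationState a e S b P) :
    ∃ P' : ι → List V, (∀ i, IsVertexPath (P' i)) ∧
      ∑ i, pathEdges (P' i) = ∑ i, pathEdges (P i) + {s(b, a)} ∧
      ∑ i, pathEnds (P' i) + {b} = ∑ i, pathEnds (P i) + {a} := by
  classical
  induction S using Finset.strongInduction generalizing b P with | _ S ih
  by_cases ha : a ∈ P (e b)
  · have hab : a ≠ b := fun hab => h.notMem (hab ▸ h.mem)
    obtain ⟨w, hw⟩ := exists_entersVia (h.mem_pathEnds b h.mem) ha hab
    obtain ⟨l, hl⟩ := exists_isRotation (h.isVertexPath (e b)) hw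
    obtain ⟨P', hpath, hedges, hends⟩ := ih _ (erase_ssubset h.mem) (h.rotate hw hl)
    refine ⟨P', hpath, hedges.trans (sum_update_add_eq P pathEdges hl.pathEdges_add), ?_⟩
    apply add_right_cancel (b := {w})
    rw [add_right_comm, hends, add_right_comm, sum_update_add_eq P pathEnds hl.pathEnds_add,
      add_right_comm]
  · obtain ⟨l, hpath, hedges, hends⟩ :=
      exists_extension (h.isVertexPath (e b)) (h.mem_pathEnds b h.mem) ha
    refine ⟨Function.update P (e b) l, fun i => ?_, ?_, sum_update_add_eq P pathEnds hends⟩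
    · obtain rfl | hi := eq_or_ne i (e b)
      · simpa using hpath
      · simpa [hi] using h.isVertexPath i
    · simpa using sum_update_add_eq P pathEdges (x := 0) (by simpa using hedges)

end PathFamilies

section Decompositions

universe u

variable {V : Type u} {ι : Type*} [Fintype ι] {G : SimpleGraph V} {a b : V} {P : ι → List V}

/-- The finite family `P` of paths, each encoded by its vertices in order, partitions the edges of
`G`. Paths with a single vertex are allowed. -/
structure IsPathDecomposition (G : SimpleGraph V) (P : ι → List V) : Prop where
  isVertexPath : ∀ i, IsVertexPath (P i)
  nodup_edges : (∑ i, pathEdges (P i)).Nodup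
  mem_edges : ∀ e, e ∈ ∑ i, pathEdges (P i) ↔ e ∈ G.edgeSet

/-- The vertex `v` is an end of the paths of the family `P` exactly `d v` times, where a
single-vertex path counts twice. -/
def HasEndCounts [DecidableEq V] (P : ι → List V) (d : V → ℕ) : Prop :=
  ∀ v, (∑ i, pathEnds (P i)).count v = d v

theorem IsPathDecomposition.exists_insert
    (hP : IsPathDecomposition (G.deleteEdges {s(a, b)}) P) (hab : G.Adj a b)
    (hends : ∀ v, G.Adj a v → v ∈ ∑ i, pathEnds (P i)) :
    ∃ P' : ι → List V, IsPathDecomposition G P' ∧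
      ∑ i, pathEnds (P' i) + {b} = ∑ i, pathEnds (P i) + {a} := by
  classical
  have hmem : ∀ e, e ∈ ∑ i, pathEdges (P i) ↔ e ∈ G.edgeSet ∧ e ≠ s(b, a) := fun e => by
    rw [hP.mem_edges, SimpleGraph.edgeSet_deleteEdges, Sym2.eq_swap]
    rfl
  have hend : ∀ v, ∃ i, G.Adj a v → v ∈ pathEnds (P i) := fun v => by
    by_cases hv : G.Adj a v
    · obtain ⟨i, -, hi⟩ := Multiset.mem_sum.1 (hends v hv)
      exact ⟨i, fun _ => hi⟩
    · obtain ⟨i, -⟩ := Multiset.mem_sum.1 (hends b hab)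
      exact ⟨i, fun h => absurd h hv⟩
  choose e he using hend
  obtain ⟨S, hS⟩ : ∃ S : Finset V, ∀ v, v ∈ S ↔ G.Adj a v :=
    ⟨{v ∈ (∑ i, pathEnds (P i)).toFinset | G.Adj a v}, by simpa using hends⟩
  have hstate : RotationState a e S b P :=
    { isVertexPath := hP.isVertexPath
      nodup_edges := by
        rw [add_comm, Multiset.singleton_add, Multiset.nodup_cons]
        exact ⟨fun h => ((hmem _).1 h).2 rfl, hP.nodup_edges⟩
      mem := (hS b).2 hab
      notMem := by simp [hS]
      mem_pathEnds := fun v hv => he v ((hS v).1 hv)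
      mem_of_entersVia := fun v _ w hw => by
        obtain ⟨hadj, hne⟩ := (hmem _).1 (Multiset.mem_sum.2 ⟨_, mem_univ _, hw.mem_pathEdges⟩)
        exact ⟨(hS w).2 hadj.symm, fun hwb => hne (by rw [hwb])⟩ }
  obtain ⟨P', hpath, hedges, hends'⟩ := hstate.exists_insert
  refine ⟨P', ⟨hpath, hedges ▸ hstate.nodup_edges, fun f => ?_⟩, hends'⟩
  have hba : s(b, a) ∈ G.edgeSet := hab.symm
  rw [hedges, Multiset.mem_add, hmem, Multiset.mem_singleton]
  grind

theorem degree_deleteEdges_pair_add [Fintype V] [DecidableEq V] [DecidableRel G.Adj]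
    [DecidableRel (G.deleteEdges {s(a, b)}).Adj] (hab : G.Adj a b) (v : V) :
    (G.deleteEdges {s(a, b)}).degree v + (if v = a ∨ v = b then 1 else 0) = G.degree v := by
  have hinc : (G.deleteEdges {s(a, b)}).incidenceFinset v =
      (G.incidenceFinset v).erase s(a, b) := by
    ext e
    simp only [SimpleGraph.mem_incidenceFinset, SimpleGraph.incidenceSet, mem_erase,
      SimpleGraph.edgeSet_deleteEdges, Set.mem_ofPred_eq, Set.mem_sdiff, Set.mem_singleton_iff]
    tauto
  have hmem : s(a, b) ∈ G.incidenceFinset v ↔ v = a ∨ v = b := by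
    simp [SimpleGraph.mk'_mem_incidenceSet_iff, hab, eq_comm]
  rw [← SimpleGraph.card_incidenceFinset_eq_degree, ← SimpleGraph.card_incidenceFinset_eq_degree,
    hinc]
  split_ifs with hv
  · exact card_erase_add_one (hmem.2 hv)
  · rw [erase_eq_of_notMem (mt hmem.1 hv), add_zero]

theorem exists_adj_forall_ne_zero {d : V → ℕ} (hG : G ≠ ⊥)
    (hd : {v | d v = 0 ∧ (G.neighborSet v).Nonempty}.Subsingleton) :
    ∃ a b, G.Adj a b ∧ ∀ v ≠ b, (G.neighborSet v).Nonempty → d v ≠ 0 := by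
  by_cases h : ∃ b, d b = 0 ∧ (G.neighborSet b).Nonempty
  · obtain ⟨b, hb, a, hba⟩ := h
    exact ⟨a, b, hba.symm, fun v hvb hv h0 => hvb (hd ⟨h0, hv⟩ ⟨hb, a, hba⟩)⟩
  · obtain ⟨a, b, hab⟩ := SimpleGraph.ne_bot_iff_exists_adj.1 hG
    exact ⟨a, b, hab, fun v _ hv h0 => h ⟨v, h0, hv⟩⟩

theorem exists_isPathDecomposition_bot [Finite V] [DecidableEq V] (d : V → ℕ)
    (hd : ∀ v, Even (d v)) :
    ∃ (ι : Type u) (_ : Fintype ι) (P : ι → List V),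
      IsPathDecomposition (⊥ : SimpleGraph V) P ∧ HasEndCounts P d := by
  have := Fintype.ofFinite V
  refine ⟨Σ v, Fin (d v / 2), inferInstance, fun i => [i.1],
    ⟨fun i => ⟨by simp, by simp⟩, by simp, by simp⟩, fun v => ?_⟩
  simp only [Fintype.sum_sigma, pathEnds_cons, List.getLast_singleton, sum_const, Finset.card_univ,
    Fintype.card_fin, Multiset.count_sum', Multiset.count_nsmul, Multiset.count_add,
    Multiset.count_singleton]
  rw [sum_eq_single v (by intro w _ hw; simp [hw.symm]) (by simp)]
  simpa [← two_mul, mul_comm] using Nat.div_two_mul_two_of_even (hd v)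

/-- The prescribed numbers of path ends before the edge `ab` is added to a decomposition, given that
the numbers afterwards are `d`: adding `ab` moves one path end from `b` to `a`. -/
def shiftEnd [DecidableEq V] (d : V → ℕ) (a b : V) : V → ℕ := d - Pi.single a 1 + Pi.single b 1

theorem shiftEnd_add [DecidableEq V] {d : V → ℕ} (hda : d a ≠ 0) (hab : a ≠ b) (v : V) :
    shiftEnd d a b v + (if v = a then 1 else 0) = d v + (if v = b then 1 else 0) := by
  obtain rfl | hva := eq_or_ne v a
  · simp [shiftEnd, hab, Nat.sub_add_cancel (Nat.pos_of_ne_zero hda)]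
  · simp [shiftEnd, hva, Pi.single_apply]

theorem shiftEnd_ne_zero [DecidableEq V] {d : V → ℕ} {v : V} (hva : v ≠ a)
    (hv : v ≠ b → d v ≠ 0) : shiftEnd d a b v ≠ 0 := by
  obtain rfl | hvb := eq_or_ne v b
  · simp [shiftEnd]
  · simpa [shiftEnd, hva, hvb] using hv hvb

theorem even_shiftEnd_iff [Fintype V] [DecidableEq V] [DecidableRel G.Adj]
    [DecidableRel (G.deleteEdges {s(a, b)}).Adj] {d : V → ℕ} {v : V} (hab : G.Adj a b)
    (hda : d a ≠ 0) (hd : Even (d v) ↔ Even (G.degree v)) :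
    Even (shiftEnd d a b v) ↔ Even ((G.deleteEdges {s(a, b)}).degree v) := by
  have hshift := shiftEnd_add hda hab.ne v
  have hdegree := degree_deleteEdges_pair_add hab v
  have hne := hab.ne
  simp only [Nat.even_iff] at hd ⊢
  split_ifs at hshift hdegree <;> grind

theorem deleteEdges_pair_lt (hab : G.Adj a b) : G.deleteEdges {s(a, b)} < G :=
  lt_of_le_of_ne (G.deleteEdges_le _) fun h => by
    rw [← h] at hab
    simp at hab

theorem HasEndCounts.of_add_singleton [DecidableEq V] {P' : ι → List V} {d : V → ℕ}
    (hP : HasEndCounts P (shiftEnd d a b)) (hda : d a ≠ 0) (hab : a ≠ b)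
    (h : ∑ i, pathEnds (P' i) + {b} = ∑ i, pathEnds (P i) + {a}) : HasEndCounts P' d := by
  intro v
  have hcount := congrArg (Multiset.count v) h
  rw [Multiset.count_add, Multiset.count_add, hP, Multiset.count_singleton,
    Multiset.count_singleton, shiftEnd_add hda hab] at hcount
  exact add_right_cancel hcount

theorem exists_isPathDecomposition_hasEndCounts [Fintype V] [DecidableEq V]
    [hdec : DecidableRel G.Adj] {d : V → ℕ} (hd : ∀ v, Even (d v) ↔ Even (G.degree v))
    (hd0 : {v | d v = 0 ∧ (G.neighborSet v).Nonempty}.Subsingleton) :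
    ∃ (ι : Type u) (_ : Fintype ι) (P : ι → List V),
      IsPathDecomposition G P ∧ HasEndCounts P d := by
  classical
  induction G using WellFoundedLT.induction generalizing d hdec with | _ G ih
  obtain rfl | hG := eq_or_ne G ⊥
  · exact exists_isPathDecomposition_bot d fun v => by simp [hd]
  obtain ⟨a, b, hab, hpos⟩ := exists_adj_forall_ne_zero hG hd0
  have hda : d a ≠ 0 := hpos a hab.ne ⟨b, hab⟩
  have hshift : ∀ v ≠ a, (G.neighborSet v).Nonempty → shiftEnd d a b v ≠ 0 :=
    fun v hva hv => shiftEnd_ne_zero hva fun hvb => hpos v hvb hv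
  have hzero : ∀ v, shiftEnd d a b v = 0 ∧ ((G.deleteEdges {s(a, b)}).neighborSet v).Nonempty →
      v = a := fun v ⟨hv, w, hvw⟩ => by
    by_contra hva
    exact hshift v hva ⟨w, G.deleteEdges_le _ hvw⟩ hv
  obtain ⟨ι, _, P, hP, hcount⟩ := ih _ (deleteEdges_pair_lt hab)
    (fun v => even_shiftEnd_iff hab hda (hd v))
    (fun v hv w hw => (hzero v hv).trans (hzero w hw).symm)
  obtain ⟨P', hP', hends⟩ := hP.exists_insert hab fun v hav => by
    rw [← Multiset.count_pos, hcount]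
    exact Nat.pos_of_ne_zero (hshift v hav.ne' ⟨a, hav.symm⟩)
  exact ⟨ι, inferInstance, P', hP', hcount.of_add_singleton hda hab.ne hends⟩

theorem isChain_adj_of_forall_mem_pathEdges {l : List V} (h : ∀ e ∈ pathEdges l, e ∈ G.edgeSet) :
    l.IsChain G.Adj := by
  induction l with
  | nil => exact .nil
  | cons x l ih =>
    cases l with
    | nil => exact .singleton x
    | cons y l =>
      rw [pathEdges_cons_cons, Multiset.forall_mem_cons] at h
      exact .cons_cons h.1 (ih h.2)

theorem edges_eq_pathEdges_support {u v : V} (p : G.Walk u v) :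
    (p.edges : Multiset (Sym2 V)) = pathEdges p.support :=
  congrArg _ p.edges_eq_zipWith_support

theorem IsPathDecomposition.exists_walks (hP : IsPathDecomposition G P) :
    ∃ L : List (Σ (a : V) (b : V), G.Walk a b), L.length = Fintype.card ι ∧
      (∀ p ∈ L, p.2.2.IsPath) ∧
      List.Pairwise (fun p q => ∀ e ∈ p.2.2.edges, e ∉ q.2.2.edges) L ∧
      (∀ e : Sym2 V, e ∈ G.edgeSet ↔ ∃ p ∈ L, e ∈ p.2.2.edges) := by
  have hsub : ∀ i, ∀ e ∈ pathEdges (P i), e ∈ G.edgeSet := fun i e he =>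
    (hP.mem_edges e).1 (Multiset.mem_sum.2 ⟨i, mem_univ i, he⟩)
  let W (i : ι) : Σ (a : V) (b : V), G.Walk a b :=
    ⟨_, _, .ofSupport (P i) (hP.isVertexPath i).1 (isChain_adj_of_forall_mem_pathEdges (hsub i))⟩
  have hsupport : ∀ i, (W i).2.2.support = P i := fun i => SimpleGraph.Walk.support_ofSupport _ _
  have hedges : ∀ i e, e ∈ (W i).2.2.edges ↔ e ∈ pathEdges (P i) := fun i e => by
    rw [← Multiset.mem_coe, edges_eq_pathEdges_support, hsupport]
  refine ⟨(univ : Finset ι).toList.map W, by simp, ?_, ?_, fun e => ?_⟩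
  · simp only [List.forall_mem_map]
    exact fun i _ => (W i).2.2.isPath_def.2 (hsupport i ▸ (hP.isVertexPath i).2)
  · refine List.pairwise_map.2 ((nodup_toList univ).imp fun {i j} hij e hi hj => hij ?_)
    exact eq_of_mem_pathEdges hP.nodup_edges ((hedges i e).1 hi) ((hedges j e).1 hj)
  · simp [← hP.mem_edges, Multiset.mem_sum, hedges]

theorem two_mul_card_eq_sum [Fintype V] [DecidableEq V] {d : V → ℕ} (hP : ∀ i, P i ≠ [])
    (hd : HasEndCounts P d) : 2 * Fintype.card ι = ∑ v, d v :=
  calc 2 * Fintype.card ι = ∑ i, (pathEnds (P i)).card := by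
        simp [card_pathEnds (hP _), mul_comm]
    _ = (∑ i, pathEnds (P i)).card := (Multiset.card_sum _ _).symm
    _ = ∑ v, (∑ i, pathEnds (P i)).count v := (Multiset.sum_count_eq_card (by simp)).symm
    _ = ∑ v, d v := sum_congr rfl fun v _ => hd v

end Decompositions

section Lovasz

variable {V : Type*} [Fintype V] (G : SimpleGraph V) [DecidableRel G.Adj]

/-- The numbers of path ends in Lovász's decomposition: one at each odd vertex, two at each even
vertex except the distinguished vertex `x`, where no path ends. -/
def endCount [DecidableEq V] (x v : V) : ℕ :=
  if v = x then 0 else if Even (G.degree v) then 2 else 1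

theorem endCount_eq_zero_iff [DecidableEq V] {x v : V} : endCount G x v = 0 ↔ v = x := by
  rw [endCount]
  split_ifs <;> simp [*]

theorem even_endCount_iff [DecidableEq V] {x : V} (hx : Even (G.degree x)) (v : V) :
    Even (endCount G x v) ↔ Even (G.degree v) := by
  obtain rfl | hv := eq_or_ne v x
  · simp [endCount, hx]
  · by_cases hev : Even (G.degree v) <;> simp [endCount, hv, hev]

theorem sum_endCount_add_two [DecidableEq V] {x : V} (hx : Even (G.degree x)) :
    ∑ v, endCount G x v + 2 = #{v | Odd (G.degree v)} + 2 * #{v | Even (G.degree v)} := by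
  have hpoint : ∀ v, endCount G x v + (if v = x then 2 else 0) =
      (if Odd (G.degree v) then 1 else 0) + 2 * (if Even (G.degree v) then 1 else 0) := by
    intro v
    rw [endCount]
    by_cases hv : v = x
    · subst hv; simp [hx, Nat.not_odd_iff_even.2 hx]
    · by_cases hev : Even (G.degree v) <;> simp [hv, hev, ← Nat.not_even_iff_odd]
  have := Fintype.sum_congr _ _ hpoint
  rw [sum_add_distrib, sum_add_distrib, ← mul_sum, ← card_filter, ← card_filter] at this
  simpa using this

end Lovasz

end PathDecomposition

open PathDecomposition Finset in
theorem stmt_9_general {V : Type*} [Fintype V] (G : SimpleGraph V) [DecidableRel G.Adj]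
    (hG : ∃ x, Even (G.degree x)) :
    ∃ L : List (Σ (a : V) (b : V), G.Walk a b),
      L.length ≤ #{v | Odd (G.degree v)} / 2 + #{v | Even (G.degree v)} - 1 ∧
      (∀ p ∈ L, p.2.2.IsPath) ∧
      List.Pairwise (fun p q => ∀ e ∈ p.2.2.edges, e ∉ q.2.2.edges) L ∧
      (∀ e : Sym2 V, e ∈ G.edgeSet ↔ ∃ p ∈ L, e ∈ p.2.2.edges) := by
  classical
  obtain ⟨x, hx⟩ := hG
  obtain ⟨ι, _, P, hP, hcount⟩ :=
    exists_isPathDecomposition_hasEndCounts (even_endCount_iff G hx) fun v hv w hw =>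
      ((endCount_eq_zero_iff G).1 hv.1).trans ((endCount_eq_zero_iff G).1 hw.1).symm
  obtain ⟨L, hlength, hL⟩ := hP.exists_walks
  have hcard := two_mul_card_eq_sum (fun i => (hP.isVertexPath i).1) hcount
  have hsum := sum_endCount_add_two G hx
  exact ⟨L, by omega, hL⟩

/-- Lovász: if a simple graph G has u vertices of odd degree and
g ≥ 1 vertices of even degree, then E(G) can be partitioned into at most
u/2 + g − 1 paths. -/
theorem stmt_9 (n : ℕ) (G : SimpleGraph (Fin n)) [DecidableRel G.Adj]
    (u g : ℕ)
    (hu : u = (Finset.univ.filter fun v => Odd (G.degree v)).card)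
    (hg : g = (Finset.univ.filter fun v => Even (G.degree v)).card)
    (hg1 : 1 ≤ g) :
    ∃ L : List (Σ (a : Fin n) (b : Fin n), G.Walk a b),
      L.length ≤ u / 2 + g - 1 ∧
      (∀ p ∈ L, p.2.2.IsPath) ∧
      List.Pairwise (fun p q => ∀ e ∈ p.2.2.edges, e ∉ q.2.2.edges) L ∧
      (∀ e : Sym2 (Fin n), e ∈ G.edgeSet ↔ ∃ p ∈ L, e ∈ p.2.2.edges) := by
  subst hu hg
  obtain ⟨x, hx⟩ := Finset.card_pos.1 hg1
  exact stmt_9_general G ⟨x, (Finset.mem_filter.1 hx).2⟩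
end
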